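/- arXiv:1111.1428 — 2 statements merged into one kernel-verified Lean document; each statement's English description precedes it below -/
import Mathlib

section
/- Fix integers m, d, z with m ≥ 2 and 0 < z < 3d. Let Z ⊂ ℙ^m be a zero-dimensional closed subscheme with deg(Z) = z; if m > 2, assume in addition that deg(Z) − deg(Z_red) ≤ d, where Z_red is the reduction of Z. Then h^1(I_Z(d)) > 0 if and only if either there is a line L ⊂ ℙ^m with deg(L ∩ Z) ≥ d+2, or there is a conic T ⊂ ℙ^m with deg(T ∩ Z) ≥ 2d+2. -/
open scoped LinearAlgebra.Projectivization

noncomputable section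

/-- The polynomial ring in `m+1` variables over `K`: homogeneous coordinate ring of `ℙ^m`. -/
abbrev PR (K : Type) [Field K] (m : ℕ) : Type := MvPolynomial (Fin (m+1)) K

/-- The space of degree-`d` forms in `m+1` variables. -/
abbrev Hd (K : Type) [Field K] (m d : ℕ) : Submodule K (PR K m) :=
  MvPolynomial.homogeneousSubmodule (Fin (m+1)) K d

/-- Projective `m`-space over `K`. -/
abbrev Pm (K : Type) [Field K] (m : ℕ) := ℙ K (Fin (m+1) → K)

/-- The target projective space `ℙ^n`, `n = C(m+d,m) - 1`, of the degree-`d` Veronese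
embedding, realized as the projectivization of the dual of the space of degree-`d` forms
(the space of degree-`d` symmetric tensors). -/
abbrev PN (K : Type) [Field K] (m d : ℕ) := ℙ K (Module.Dual K (Hd K m d))

variable {K : Type} [Field K] {m : ℕ}

/-- Hilbert function of `R/I` in degree `t`. -/
def hilbQ (I : Ideal (PR K m)) (t : ℕ) : ℕ :=
  Module.finrank K ((Hd K m t).map (Ideal.Quotient.mkₐ K I).toLinearMap)

/-- The degree (length) of the projective scheme defined by `I`: the eventual value of the
Hilbert function of `R/I`. -/
def idealDeg (I : Ideal (PR K m)) : ℕ := Filter.limsup (fun t => hilbQ I t) Filter.atTop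

/-- `h^1(𝓘_Z(d))` for the zero-dimensional scheme `Z` with (saturated) ideal `I`:
it equals `deg Z - dim (R/I)_d`. -/
def h1I (I : Ideal (PR K m)) (d : ℕ) : ℕ := idealDeg I - hilbQ I d

/-- An ideal is homogeneous. -/
def IsHomogI (I : Ideal (PR K m)) : Prop :=
  ∀ f ∈ I, ∀ n : ℕ, MvPolynomial.homogeneousComponent n f ∈ I

/-- An ideal is saturated with respect to the irrelevant maximal ideal. -/
def IsSatI (I : Ideal (PR K m)) : Prop :=
  ∀ f : PR K m, (∀ i, MvPolynomial.X i * f ∈ I) → f ∈ I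

/-- A closed subscheme of `ℙ^m`, given by its saturated homogeneous ideal. -/
structure PSub (K : Type) [Field K] (m : ℕ) where
  I : Ideal (PR K m)
  homog : IsHomogI I
  sat : IsSatI I

/-- A (closed sub)scheme is zero-dimensional iff the Hilbert function of `R/I` is bounded. -/
def IsZeroDimI (I : Ideal (PR K m)) : Prop := ∃ C, ∀ t, hilbQ I t ≤ C

/-- A polynomial vanishes at a projective point (every homogeneous component vanishes
at a representative). -/
def vanishesAt (f : PR K m) (a : Pm K m) : Prop :=
  ∀ n : ℕ, MvPolynomial.eval a.rep (MvPolynomial.homogeneousComponent n f) = 0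

/-- Zero locus of an ideal in `ℙ^m`. -/
def pzeroLocus (I : Ideal (PR K m)) : Set (Pm K m) := {a | ∀ f ∈ I, vanishesAt f a}

/-- The (saturated) homogeneous ideal of a set of points of `ℙ^m`. -/
def idealOfSet (S : Set (Pm K m)) : Ideal (PR K m) :=
  Ideal.span {f : PR K m | (∃ n, f.IsHomogeneous n) ∧ ∀ a ∈ S, MvPolynomial.eval a.rep f = 0}

/-- Saturation of a homogeneous ideal: the smallest saturated homogeneous ideal containing it. -/
def satIdeal (J : Ideal (PR K m)) : Ideal (PR K m) := sInf {J' | J ≤ J' ∧ IsHomogI J' ∧ IsSatI J'}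

/-- The scheme defined by the (saturated) ideal `I` is reduced. -/
def IsReducedI (I : Ideal (PR K m)) : Prop := I = idealOfSet (pzeroLocus I)

/-- Connected component of a zero-dimensional scheme at a point `a`: the largest subscheme
supported at `a`, i.e. the `a`-primary component. -/
def componentAt (I : Ideal (PR K m)) (a : Pm K m) : Ideal (PR K m) :=
  sInf {J | I ≤ J ∧ IsHomogI J ∧ IsSatI J ∧ pzeroLocus J ⊆ {a}}

/-- Residual scheme of `Z` with respect to the hypersurface `f = 0`: the colon ideal `(I_Z : f)`. -/
def resIdeal (I : Ideal (PR K m)) (f : PR K m) : Ideal (PR K m) :=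
  Submodule.colon I (Ideal.span {f})

/-- Degree of the scheme-theoretic intersection of the subschemes defined by `I` and `J`. -/
def interDeg (I J : Ideal (PR K m)) : ℕ := idealDeg (I ⊔ J)

/-- The degree-`d` Veronese image of a vector `v`: the evaluation-at-`v` functional on
degree-`d` forms. -/
def nu (d : ℕ) (v : Fin (m+1) → K) : Module.Dual K (Hd K m d) :=
  (MvPolynomial.aeval v).toLinearMap ∘ₗ (Hd K m d).subtype

/-- The linear span of the Veronese image `ν_d(S)` of a set `S` of points of `ℙ^m`. -/
def dualSpan (d : ℕ) (S : Set (Pm K m)) : Submodule K (Module.Dual K (Hd K m d)) :=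
  Submodule.span K ((fun a => nu d a.rep) '' S)

/-- The linear span `⟨ν_d(Z)⟩` of the Veronese image of the subscheme with ideal `I`:
the annihilator of the degree-`d` part of `I`. -/
def schemeSpanSub (I : Ideal (PR K m)) (d : ℕ) : Submodule K (Module.Dual K (Hd K m d)) where
  carrier := {φ | ∀ f : Hd K m d, (f : PR K m) ∈ I → φ f = 0}
  add_mem' := by
    intro a b ha hb f hf
    simp [LinearMap.add_apply, ha f hf, hb f hf]
  zero_mem' := by intro f hf; simp
  smul_mem' := by
    intro c a ha f hf
    simp [LinearMap.smul_apply, ha f hf]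

/-- `P ∈ ⟨ν_d(Z)⟩`, for `Z` the subscheme with ideal `I`. -/
def inSpanI (I : Ideal (PR K m)) (d : ℕ) (P : PN K m d) : Prop := P.rep ∈ schemeSpanSub I d

/-- `P ∈ ⟨ν_d(S)⟩` for a set `S` of points of `ℙ^m`. -/
def inSpanSet (d : ℕ) (S : Set (Pm K m)) (P : PN K m d) : Prop := P.rep ∈ dualSpan d S

/-- `L` is a linear subspace of `ℙ^m`. -/
def IsLinearSub (L : Set (Pm K m)) : Prop :=
  ∃ W : Submodule K (Fin (m+1) → K), L = {a | a.submodule ≤ W}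

/-- `L` is a line of `ℙ^m`. -/
def IsLine (L : Set (Pm K m)) : Prop :=
  ∃ W : Submodule K (Fin (m+1) → K), Module.finrank K W = 2 ∧ L = {a | a.submodule ≤ W}

/-- `L` is a plane of `ℙ^m`. -/
def IsPlane (L : Set (Pm K m)) : Prop :=
  ∃ W : Submodule K (Fin (m+1) → K), Module.finrank K W = 3 ∧ L = {a | a.submodule ≤ W}

/-- `J` is the (saturated homogeneous) ideal of a conic of `ℙ^m`: a degree-2 curve contained
in a plane (possibly reducible). -/
def IsConic (J : Ideal (PR K m)) : Prop :=
  ∃ (W : Submodule K (Fin (m+1) → K)) (q : PR K m),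
    Module.finrank K W = 3 ∧ q.IsHomogeneous 2 ∧
    q ∉ idealOfSet {a : Pm K m | a.submodule ≤ W} ∧
    J = satIdeal (idealOfSet {a : Pm K m | a.submodule ≤ W} ⊔ Ideal.span {q})

/-- The algebra of polynomial functions on a `K`-vector space. -/
def polyFunctions (K V : Type) [Field K] [AddCommGroup V] [Module K V] : Subalgebra K (V → K) :=
  Algebra.adjoin K {g : V → K | ∃ φ : V →ₗ[K] K, g = ⇑φ}

/-- Zariski closure of a subset of a projective space. -/
def zClosure {V : Type} [AddCommGroup V] [Module K V] (T : Set (ℙ K V)) : Set (ℙ K V) :=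
  {P | ∀ F ∈ polyFunctions K V, (∀ Q ∈ T, ∀ c : K, F (c • Q.rep) = 0) →
    ∀ c : K, F (c • P.rep) = 0}

/-- The Veronese variety `X_{m,d} = ν_d(ℙ^m)` as a subset of `PN K m d`. -/
def XSet (K : Type) [Field K] (m d : ℕ) : Set (PN K m d) :=
  {Q | ∃ a : Pm K m, Q.submodule = Submodule.span K {nu d a.rep}}

/-- The image `ν_d(S)` of a set of points of `ℙ^m`, as a subset of `PN K m d`. -/
def nuSet (d : ℕ) (S : Set (Pm K m)) : Set (PN K m d) :=
  {Q | ∃ a ∈ S, Q.submodule = Submodule.span K {nu d a.rep}}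

/-- The rank of a point `P` of `PN` with respect to a subset `Y ⊆ PN`. -/
def rankWrt {m d : ℕ} (Y : Set (PN K m d)) (P : PN K m d) : ℕ :=
  sInf {r | ∃ S : Finset (PN K m d), ↑S ⊆ Y ∧ S.card = r ∧
    P.rep ∈ Submodule.span K (Projectivization.rep '' (S : Set (PN K m d)))}

/-- The `s`-th secant variety of `Y ⊆ PN`: the Zariski closure of the union of the spans
of `s` points of `Y`. -/
def secantWrt {m d : ℕ} (Y : Set (PN K m d)) (s : ℕ) : Set (PN K m d) :=
  zClosure {Q | ∃ S : Finset (PN K m d), ↑S ⊆ Y ∧ S.card ≤ s ∧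
    Q.rep ∈ Submodule.span K (Projectivization.rep '' (S : Set (PN K m d)))}

/-- The border rank of `P` with respect to `Y ⊆ PN`. -/
def brankWrt {m d : ℕ} (Y : Set (PN K m d)) (P : PN K m d) : ℕ :=
  sInf {s | 0 < s ∧ P ∈ secantWrt Y s}

/-- Symmetric rank. -/
def srank {m : ℕ} (d : ℕ) (P : PN K m d) : ℕ := rankWrt (XSet K m d) P

/-- Border rank. -/
def brank {m : ℕ} (d : ℕ) (P : PN K m d) : ℕ := brankWrt (XSet K m d) P

/-- Cactus rank: minimal degree of a zero-dimensional closed subscheme `E ⊂ ℙ^m` with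
`P ∈ ⟨ν_d(E)⟩`. -/
def crank {m : ℕ} (d : ℕ) (P : PN K m d) : ℕ :=
  sInf {c | ∃ Z : PSub K m, IsZeroDimI Z.I ∧ idealDeg Z.I = c ∧ inSpanI Z.I d P}

/-- `σ_{s,r}(X_{m,d})`. -/
def sigmaSet (K : Type) [Field K] (m d s r : ℕ) : Set (PN K m d) :=
  {P | brank d P = s ∧ srank d P = r}

/-- A property `Φ` holds for a general `k`-tuple of points of the linear subspace of `ℙ^m`
determined by `W`. -/
def GenerallyOn (W : Submodule K (Fin (m+1) → K)) (k : ℕ)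
    (Φ : (Fin k → Pm K m) → Prop) : Prop :=
  ∃ w : Fin 3 → W, Submodule.span K (Set.range fun j => (w j : Fin (m+1) → K)) = W ∧
    ∃ F : MvPolynomial (Fin k × Fin 3) K, F ≠ 0 ∧
      ∀ c : Fin k → Fin 3 → K,
        MvPolynomial.eval (fun p => c p.1 p.2) F ≠ 0 →
        ∀ e : Fin k → Pm K m,
          (∀ i, (e i).submodule = Submodule.span K {∑ j, c i j • (w j : Fin (m+1) → K)}) → Φ e

end

/-!
Choose a linear form which is a nonzerodivisor modulo `I_Z` and dehomogenize: `Z` becomes the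
spectrum of a finite-dimensional algebra `O`, and the forms of degree `t` have image `V ^ t`, where
`V ∋ 1` is the image of the linear forms. Thus `h_Z(t) = dim V ^ t`, and `h^1(I_Z(d)) > 0` means
`V ^ d ≠ O`.

If this holds, replace `Z` by a minimal closed subscheme for which it still holds. By minimality
every nonzero functional `η` on `O` killing `V ^ d` defines a nondegenerate form `η (f * g)`. If
`η'` is another one, then `η' = η (g * ·)` for some `g`, and an eigenvector of multiplication by `g`
makes the form of some `c * η - η'` degenerate; so `V ^ d` is a hyperplane. Nondegeneracy also gives
`dim V ^ i + dim V ^ (d - i) ≤ dim O`, and an increment of `dim V ^ t` which is at most `1`, or at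
most `2` and not the first, is followed by an increment subject to the same bound. As
`dim O < 3 * d`, these constraints leave two cases: `dim V = 2` and `dim O ≥ d + 2`, where `Z` lies
on a line, or `dim V = 3`, `dim V ^ 2 ≤ 5` and `dim O ≥ 2 * d + 2`, where `Z` lies on a conic.

Conversely, if `V ^ d = O` then every closed subscheme of `Z` imposes independent conditions on
forms of degree `d`, so its degree is at most `d + 1` on a line and `2 * d + 1` on a conic.
-/

namespace ZeroDimScheme

open Module MvPolynomial

theorem add_mul_le_of_persistent_growth {h : ℕ → ℕ} {a c n : ℕ} (han : a ≤ n)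
    (hpersist : ∀ s, a ≤ s → h (s + 1) ≤ h s + c → h (s + 2) ≤ h (s + 1) + c)
    (hlast : h n + c < h (n + 1)) : h a + (c + 1) * (n + 1 - a) ≤ h (n + 1) := by
  induction n, han using Nat.le_induction with
  | base => simp only [Nat.add_sub_cancel_left, mul_one]; omega
  | succ n han ih =>
    have hprev : h n + c < h (n + 1) := by
      by_contra! hsmall
      exact (hpersist n han hsmall).not_gt hlast
    have hsucc : n + 1 + 1 - a = (n + 1 - a) + 1 := by omega
    rw [hsucc, mul_add, mul_one]
    have := ih hprev
    omega

/-- The constraints satisfied by the Hilbert function `h` of a zero-dimensional scheme of length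
`h (d + 1)` which fails to impose independent conditions on forms of degree `d`, while all its
proper closed subschemes do impose independent conditions. -/
structure CriticalGrowth (h : ℕ → ℕ) (d : ℕ) : Prop where
  zero : h 0 = 1
  lt_succ : ∀ t ≤ d, h t < h (t + 1)
  last : h (d + 1) = h d + 1
  growth_one : ∀ s, h (s + 1) ≤ h s + 1 → h (s + 2) ≤ h (s + 1) + 1
  growth_two : ∀ s, 1 ≤ s → h (s + 1) ≤ h s + 2 → h (s + 2) ≤ h (s + 1) + 2
  duality : ∀ i j, i + j = d → h i + h j ≤ h (d + 1)

namespace CriticalGrowth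

variable {h : ℕ → ℕ} {d : ℕ}

theorem add_two_le (hh : CriticalGrowth h d) {t : ℕ} (ht : t ≤ d) : t + 2 ≤ h (t + 1) := by
  have := hh.lt_succ t ht
  induction t with
  | zero => have := hh.zero; omega
  | succ t ih => have := ih (by omega) (hh.lt_succ t (by omega)); omega

theorem one_le_three (hh : CriticalGrowth h d) (hlt : h (d + 1) < 3 * d) : h 1 ≤ 3 := by
  by_contra! hfour
  obtain ⟨e, rfl⟩ : ∃ e, d = e + 1 := ⟨d - 1, by omega⟩
  have hdual := hh.duality 1 e (by omega)
  have hlast := hh.last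
  have he : 1 ≤ e := by
    rcases Nat.eq_zero_or_pos e with rfl | he
    · simp only [zero_add] at hdual hlast hlt
      omega
    · exact he
  have := add_mul_le_of_persistent_growth he hh.growth_two (by omega)
  omega

theorem two_mul_add_two_le (hh : CriticalGrowth h d) (hlt : h (d + 1) < 3 * d) (hone : h 1 = 3) :
    2 * d + 2 ≤ h (d + 1) := by
  obtain ⟨e, rfl⟩ : ∃ e, d = e + 1 := ⟨d - 1, by omega⟩
  have hdual := hh.duality 1 e (by omega)
  have hlast := hh.last
  have hzero := hh.zero
  have := add_mul_le_of_persistent_growth e.zero_le (fun s _ => hh.growth_one s) (by omega)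
  omega

theorem two_le_five (hh : CriticalGrowth h d) (hlt : h (d + 1) < 3 * d) (hone : h 1 = 3) :
    h 2 ≤ 5 := by
  by_contra! hsix
  obtain ⟨e, rfl⟩ : ∃ e, d = e + 3 := ⟨d - 3, by have := hh.two_mul_add_two_le hlt hone; omega⟩
  have hlast : h (e + 4) = h (e + 3) + 1 := hh.last
  have hlt : h (e + 4) < 3 * (e + 3) := hlt
  have hgrowth_le : h (e + 3) ≤ h (e + 2) + 2 := by
    by_contra! hbig
    have : h 1 + 3 * (e + 2) ≤ h (e + 3) :=
      add_mul_le_of_persistent_growth (by omega : 1 ≤ e + 2) hh.growth_two hbig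
    omega
  have hgrowth_ge : h 1 + h (e + 2) ≤ h (e + 4) := hh.duality 1 (e + 2) (by omega)
  have hprev : h 2 + h (e + 1) ≤ h (e + 4) := hh.duality 2 (e + 1) (by omega)
  have : h 1 + 3 * (e + 1) ≤ h (e + 2) :=
    add_mul_le_of_persistent_growth (by omega : 1 ≤ e + 1) hh.growth_two
      (by change h (e + 1) + 2 < h (e + 2); omega)
  omega

theorem line_or_conic (hh : CriticalGrowth h d) (hlt : h (d + 1) < 3 * d) :
    (h 1 = 2 ∧ d + 2 ≤ h (d + 1)) ∨ (h 1 = 3 ∧ h 2 ≤ 5 ∧ 2 * d + 2 ≤ h (d + 1)) := by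
  have hzero := hh.zero
  have hone_ge : h 0 < h 1 := hh.lt_succ 0 d.zero_le
  have hone_le := hh.one_le_three hlt
  rcases (by omega : h 1 = 2 ∨ h 1 = 3) with hone | hone
  · exact .inl ⟨hone, hh.add_two_le le_rfl⟩
  · exact .inr ⟨hone, hh.two_le_five hlt hone, hh.two_mul_add_two_le hlt hone⟩

end CriticalGrowth

section LinearAlgebra

variable {K M N Q : Type*} [Field K] [AddCommGroup M] [Module K M] [AddCommGroup N] [Module K N]
  [AddCommGroup Q] [Module K Q]

theorem finrank_map_mkQ_add_finrank [FiniteDimensional K M] {S T : Submodule K M} (h : S ≤ T) :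
    finrank K (T.map S.mkQ) + finrank K S = finrank K T := by
  have hrank := (S.mkQ.domRestrict T).finrank_range_add_finrank_ker
  rw [LinearMap.range_domRestrict, LinearMap.ker_domRestrict, Submodule.ker_mkQ] at hrank
  rwa [← (Submodule.comapSubtypeEquivOfLe h).finrank_eq]

theorem range_le_range_flip_of_finrank_range_le_one [FiniteDimensional K Q] {β : M →ₗ[K] N →ₗ[K] Q}
    (hrank : ∀ x, finrank K (LinearMap.range (β x)) ≤ 1) {x : M} {p : N} (hxp : β x p ≠ 0) (y : M) :
    LinearMap.range (β y) ≤ LinearMap.range (β.flip p) := by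
  have hspan : ∀ w, β w p ≠ 0 → LinearMap.range (β w) ≤ LinearMap.range (β.flip p) :=
    fun w hw => by
      have hline : K ∙ β w p = LinearMap.range (β w) :=
        Submodule.eq_of_le_of_finrank_le (by simp) ((hrank w).trans (finrank_span_singleton hw).ge)
      rw [← hline, Submodule.span_singleton_le_iff_mem]
      exact ⟨w, rfl⟩
  by_cases hyp : β y p = 0
  · have hsum : β (x + y) p ≠ 0 := by simpa [hyp] using hxp
    rintro _ ⟨q, rfl⟩
    have hq : β x q + β y q ∈ LinearMap.range (β.flip p) := by
      simpa using hspan _ hsum ⟨q, rfl⟩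
    exact (Submodule.add_mem_iff_right _ (hspan x hxp ⟨q, rfl⟩)).mp hq
  · exact hspan y hyp

end LinearAlgebra

section PowersOfSubspaces

variable {K O : Type*} [Field K] [CommRing O] [Algebra K O] {V : Submodule K O}

theorem pow_le_pow_of_one_mem (hone : 1 ∈ V) {s t : ℕ} (hst : s ≤ t) : V ^ s ≤ V ^ t :=
  pow_le_pow_right' (Submodule.one_le.mpr hone) hst

theorem mul_mem_pow_succ {s : ℕ} {x p : O} (hx : x ∈ V) (hp : p ∈ V ^ s) :
    x * p ∈ V ^ (s + 1) :=
  pow_succ' V s ▸ Submodule.mul_mem_mul hx hp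

theorem pow_lt_pow_succ (hone : 1 ∈ V) {d n t : ℕ} (htd : t ≤ d) (hd : V ^ d ≠ ⊤)
    (hn : V ^ n = ⊤) : V ^ t < V ^ (t + 1) := by
  refine (pow_le_pow_of_one_mem hone t.le_succ).lt_of_ne fun heq => hd ?_
  have hstable : ∀ k, V ^ (t + k) = V ^ t := fun k => by
    induction k with
    | zero => rfl
    | succ k ih => rw [← add_assoc, pow_succ, ih, ← pow_succ, ← heq]
  have htop : V ^ (t + n) = ⊤ :=
    top_le_iff.mp (hn.ge.trans (pow_le_pow_of_one_mem hone (Nat.le_add_left n t)))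
  rw [hstable] at htop
  exact top_le_iff.mp (htop.ge.trans (pow_le_pow_of_one_mem hone htd))

/-- The multiplication `V × V ^ s → V ^ (s + 1) / V ^ s`, with values in the larger space
`O ⧸ V ^ s`. Its ranks control the growth of `dim V ^ s`. -/
def mulQuot (V : Submodule K O) (s : ℕ) : V →ₗ[K] ↥(V ^ s) →ₗ[K] O ⧸ V ^ s :=
  ((LinearMap.mul K O).domRestrict₁₂ V (V ^ s)).compr₂ (V ^ s).mkQ

theorem mulQuot_apply (s : ℕ) (x : V) (p : ↥(V ^ s)) :
    mulQuot V s x p = (V ^ s).mkQ (x * p) := rfl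

theorem map_mkQ_pow_succ_le_iff {s : ℕ} {T : Submodule K (O ⧸ V ^ s)} :
    (V ^ (s + 1)).map (V ^ s).mkQ ≤ T ↔ ∀ x, LinearMap.range (mulQuot V s x) ≤ T := by
  rw [Submodule.map_le_iff_le_comap, pow_succ', Submodule.mul_le]
  constructor
  · rintro h x _ ⟨p, rfl⟩
    exact h x x.2 p p.2
  · exact fun h x hx p hp => h ⟨x, hx⟩ ⟨⟨p, hp⟩, rfl⟩

theorem range_mulQuot_le (s : ℕ) (x : V) :
    LinearMap.range (mulQuot V s x) ≤ (V ^ (s + 1)).map (V ^ s).mkQ :=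
  map_mkQ_pow_succ_le_iff.mp le_rfl x

theorem range_mulQuot_flip_le {s : ℕ} (u : V) (v : ↥(V ^ s)) :
    LinearMap.range ((mulQuot V (s + 1)).flip
      ⟨u * v, mul_mem_pow_succ u.2 v.2⟩) ≤
      LinearMap.range (mulQuot V (s + 1) u) := by
  rintro _ ⟨z, rfl⟩
  refine ⟨⟨z * v, mul_mem_pow_succ z.2 v.2⟩, ?_⟩
  simp only [LinearMap.flip_apply, mulQuot_apply]
  congr 1
  ring

theorem exists_mulQuot_ne_zero {s : ℕ} (hne : (V ^ (s + 1 + 1)).map (V ^ (s + 1)).mkQ ≠ ⊥) :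
    ∃ (x u : V) (v : ↥(V ^ s)), mulQuot V (s + 1) x ⟨u * v, mul_mem_pow_succ u.2 v.2⟩ ≠ 0 := by
  by_contra! hzero
  refine hne (le_bot_iff.mp (map_mkQ_pow_succ_le_iff.mpr ?_))
  rintro x _ ⟨⟨p, hp⟩, rfl⟩
  have hker : V * V ^ s ≤ LinearMap.ker ((V ^ (s + 1)).mkQ ∘ₗ LinearMap.mulLeft K (x : O)) :=
    Submodule.mul_le.mpr fun u hu v hv => hzero x ⟨u, hu⟩ ⟨v, hv⟩
  exact hker (pow_succ' V s ▸ hp)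

theorem map_mkQ_le_range_mulQuot_succ {s : ℕ} {x : V}
    (hx : (V ^ (s + 1)).map (V ^ s).mkQ ≤ LinearMap.range (mulQuot V s x)) :
    (V ^ (s + 1 + 1)).map (V ^ (s + 1)).mkQ ≤ LinearMap.range (mulQuot V (s + 1) x) := by
  refine map_mkQ_pow_succ_le_iff.mpr ?_
  rintro y _ ⟨⟨p, hp⟩, rfl⟩
  obtain ⟨q, hq⟩ := hx ⟨p, hp, rfl⟩
  have hmem : (y : O) * (x * q - p) ∈ V ^ (s + 1) :=
    mul_mem_pow_succ y.2 ((Submodule.Quotient.eq _).mp hq)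
  refine ⟨⟨y * q, mul_mem_pow_succ y.2 q.2⟩, (Submodule.Quotient.eq _).mpr ?_⟩
  convert hmem using 1
  simp only [LinearMap.domRestrict₁₂_apply, LinearMap.mul_apply']
  ring

variable [FiniteDimensional K O]

theorem finrank_map_mkQ_pow_succ_add (hone : 1 ∈ V) (s : ℕ) :
    finrank K ((V ^ (s + 1)).map (V ^ s).mkQ) + finrank K ↥(V ^ s) = finrank K ↥(V ^ (s + 1)) :=
  finrank_map_mkQ_add_finrank (pow_le_pow_of_one_mem hone s.le_succ)

theorem finrank_range_mulQuot_add_lt (hone : 1 ∈ V) {s : ℕ} {x : V}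
    (hx : ¬ (V ^ (s + 1)).map (V ^ s).mkQ ≤ LinearMap.range (mulQuot V s x)) :
    finrank K (LinearMap.range (mulQuot V s x)) + finrank K ↥(V ^ s) <
      finrank K ↥(V ^ (s + 1)) := by
  rw [← finrank_map_mkQ_pow_succ_add hone]
  exact Nat.add_lt_add_right
    (Submodule.finrank_lt_finrank_of_lt ((range_mulQuot_le s x).lt_of_not_ge hx)) _

theorem exists_map_mkQ_le_range_of_le_add_one (hone : 1 ∈ V) {s : ℕ}
    (hgrowth : finrank K ↥(V ^ (s + 1)) ≤ finrank K ↥(V ^ s) + 1) :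
    ∃ x, (V ^ (s + 1)).map (V ^ s).mkQ ≤ LinearMap.range (mulQuot V s x) := by
  by_contra! hfull
  have hbot : ∀ x, LinearMap.range (mulQuot V s x) = ⊥ := fun x => by
    have := finrank_range_mulQuot_add_lt hone (hfull x)
    exact Submodule.finrank_eq_zero.mp (by omega)
  exact hfull 0 (map_mkQ_pow_succ_le_iff.mpr fun x => (hbot x).le.trans bot_le)

theorem exists_map_mkQ_le_range_of_le_add_two (hone : 1 ∈ V) {s : ℕ}
    (hgrowth : finrank K ↥(V ^ (s + 1 + 1)) ≤ finrank K ↥(V ^ (s + 1)) + 2) :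
    ∃ x, (V ^ (s + 1 + 1)).map (V ^ (s + 1)).mkQ ≤ LinearMap.range (mulQuot V (s + 1) x) := by
  by_contra! hfull
  have hrank : ∀ x, finrank K (LinearMap.range (mulQuot V (s + 1) x)) ≤ 1 := fun x => by
    have := finrank_range_mulQuot_add_lt hone (hfull x)
    omega
  have hne : (V ^ (s + 1 + 1)).map (V ^ (s + 1)).mkQ ≠ ⊥ := fun hbot =>
    hfull 0 (hbot.le.trans bot_le)
  obtain ⟨x, u, v, hxuv⟩ := exists_mulQuot_ne_zero hne
  exact hfull u (map_mkQ_pow_succ_le_iff.mpr fun y =>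
    (range_le_range_flip_of_finrank_range_le_one hrank hxuv y).trans (range_mulQuot_flip_le u v))

theorem finrank_pow_add_two_add_le (hone : 1 ∈ V) {s : ℕ} {x : V}
    (hx : (V ^ (s + 1)).map (V ^ s).mkQ ≤ LinearMap.range (mulQuot V s x)) :
    finrank K ↥(V ^ (s + 1 + 1)) + finrank K ↥(V ^ s) ≤ 2 * finrank K ↥(V ^ (s + 1)) := by
  have hker : (V ^ s).submoduleOf (V ^ (s + 1)) ≤ LinearMap.ker (mulQuot V (s + 1) x) :=
    fun p hp => (Submodule.Quotient.mk_eq_zero _).mpr (mul_mem_pow_succ x.2 hp)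
  have hdom : finrank K ((V ^ s).submoduleOf (V ^ (s + 1))) = finrank K ↥(V ^ s) :=
    (Submodule.submoduleOfEquivOfLe (pow_le_pow_of_one_mem hone s.le_succ)).finrank_eq
  have hrank := (mulQuot V (s + 1) x).finrank_range_add_finrank_ker
  have hquot := finrank_map_mkQ_pow_succ_add hone (s + 1)
  have hrange := Submodule.finrank_mono (map_mkQ_le_range_mulQuot_succ hx)
  have := Submodule.finrank_mono hker
  omega

end PowersOfSubspaces

section CriticalAlgebra

variable {K O : Type*} [Field K] [CommRing O] [Algebra K O]

/-- The symmetric bilinear form `(f, g) ↦ η (f * g)` attached to a functional `η` on an algebra;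
it is nondegenerate exactly when `η` generates the dualizing module. -/
def productForm (η : Dual K O) : O →ₗ[K] Dual K O := (LinearMap.mul K O).compr₂ η

theorem productForm_apply (η : Dual K O) (f g : O) : productForm η f g = η (f * g) := rfl

theorem injective_productForm {S : Submodule K O}
    (hmin : ∀ a : Ideal O, a ≠ ⊥ → S ⊔ a.restrictScalars K = ⊤) {η : Dual K O} (hη : η ≠ 0)
    (hS : S ≤ LinearMap.ker η) : Function.Injective (productForm η) := by
  rw [← LinearMap.ker_eq_bot, LinearMap.ker_eq_bot']
  intro f hf
  by_contra hf0
  have hspan : (Ideal.span {f}).restrictScalars K ≤ LinearMap.ker η := fun y hy => by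
    obtain ⟨g, rfl⟩ := Ideal.mem_span_singleton.mp hy
    exact DFunLike.congr_fun hf g
  refine hη (LinearMap.ker_eq_top.mp (top_le_iff.mp ?_))
  rw [← hmin (Ideal.span {f}) (by simpa using hf0)]
  exact sup_le hS hspan

variable [FiniteDimensional K O]

theorem finrank_le_one_of_injective_productForm [IsAlgClosed K] {N : Submodule K (Dual K O)}
    (hN : ∀ η ∈ N, η ≠ 0 → Function.Injective (productForm η)) : finrank K N ≤ 1 := by
  rcases eq_or_ne N ⊥ with rfl | hbot
  · simp
  obtain ⟨η, hηN, hη⟩ := Submodule.exists_mem_ne_zero_of_ne_bot hbot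
  refine finrank_le_one ⟨η, hηN⟩ ?_
  rintro ⟨η', hη'N⟩
  have hsurj : Function.Surjective (productForm η) :=
    (LinearMap.injective_iff_surjective_of_finrank_eq_finrank
      Subspace.dual_finrank_eq.symm).mp (hN η hηN hη)
  obtain ⟨g, rfl⟩ := hsurj η'
  have : Nontrivial O := by
    by_contra htriv
    rw [not_nontrivial_iff_subsingleton] at htriv
    exact hη (Subsingleton.elim _ _)
  obtain ⟨c, hc⟩ := Module.End.exists_eigenvalue (LinearMap.mulLeft K g)
  obtain ⟨f, hf⟩ := hc.exists_hasEigenvector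
  have hgf : g * f = c • f := hf.apply_eq_smul
  refine ⟨c, Subtype.ext ?_⟩
  change c • η = productForm η g
  by_contra hne
  refine hf.2 (hN _ (N.sub_mem (N.smul_mem c hηN) hη'N) (sub_ne_zero.mpr hne) ?_)
  ext h
  simp [productForm_apply, ← mul_assoc, hgf]

theorem finrank_add_finrank_le_of_mul_le_ker {η : Dual K O}
    (hη : Function.Injective (productForm η)) {S T : Submodule K O}
    (hST : S * T ≤ LinearMap.ker η) : finrank K S + finrank K T ≤ finrank K O := by
  have hann : S.map (productForm η) ≤ T.dualAnnihilator := by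
    rintro _ ⟨f, hf, rfl⟩
    exact (Submodule.mem_dualAnnihilator _).mpr fun g hg => hST (Submodule.mul_mem_mul hf hg)
  have hS := Submodule.finrank_mono hann
  rw [← (Submodule.equivMapOfInjective (productForm η) hη S).finrank_eq] at hS
  have := Subspace.finrank_add_finrank_dualAnnihilator_eq T
  omega

theorem finrank_add_one_eq_of_minimal [IsAlgClosed K] {S : Submodule K O} (hS : S ≠ ⊤)
    (hmin : ∀ a : Ideal O, a ≠ ⊥ → S ⊔ a.restrictScalars K = ⊤) :
    finrank K S + 1 = finrank K O := by
  have hann : finrank K S.dualAnnihilator ≤ 1 :=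
    finrank_le_one_of_injective_productForm fun η hη hne => injective_productForm hmin hne
      ((Submodule.mem_dualAnnihilator η).mp hη)
  have hlt := Submodule.finrank_lt hS
  have := Subspace.finrank_add_finrank_dualAnnihilator_eq S
  omega

variable {V : Submodule K O} {d : ℕ}

theorem finrank_pow_succ_of_minimal [IsAlgClosed K] (hone : 1 ∈ V) {n : ℕ} (hn : V ^ n = ⊤)
    (hd : V ^ d ≠ ⊤) (hmin : ∀ a : Ideal O, a ≠ ⊥ → V ^ d ⊔ a.restrictScalars K = ⊤) :
    finrank K ↥(V ^ (d + 1)) = finrank K O := by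
  have hlt := Submodule.finrank_lt_finrank_of_lt (pow_lt_pow_succ hone le_rfl hd hn)
  have := finrank_add_one_eq_of_minimal hd hmin
  have := (V ^ (d + 1)).finrank_le
  omega

theorem criticalGrowth_finrank_pow [IsAlgClosed K] (hone : 1 ∈ V) {n : ℕ} (hn : V ^ n = ⊤)
    (hd : V ^ d ≠ ⊤) (hmin : ∀ a : Ideal O, a ≠ ⊥ → V ^ d ⊔ a.restrictScalars K = ⊤) :
    CriticalGrowth (fun t => finrank K ↥(V ^ t)) d where
  zero := by
    have : Nontrivial O := by
      by_contra htriv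
      rw [not_nontrivial_iff_subsingleton] at htriv
      exact hd (Subsingleton.elim _ _)
    rw [pow_zero, Submodule.one_eq_span]
    exact finrank_span_singleton one_ne_zero
  lt_succ t ht := Submodule.finrank_lt_finrank_of_lt (pow_lt_pow_succ hone ht hd hn)
  last := (finrank_pow_succ_of_minimal hone hn hd hmin).trans
    (finrank_add_one_eq_of_minimal hd hmin).symm
  growth_one s hs := by
    obtain ⟨x, hx⟩ := exists_map_mkQ_le_range_of_le_add_one hone hs
    have := finrank_pow_add_two_add_le hone hx
    change finrank K ↥(V ^ (s + 1 + 1)) ≤ _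
    omega
  growth_two s hs hgrowth := by
    obtain ⟨s, rfl⟩ := Nat.exists_eq_add_of_le' hs
    obtain ⟨x, hx⟩ := exists_map_mkQ_le_range_of_le_add_two hone hgrowth
    have := finrank_pow_add_two_add_le hone hx
    change finrank K ↥(V ^ (s + 1 + 1 + 1)) ≤ _
    omega
  duality i j hij := by
    obtain ⟨η, hη, hker⟩ := Submodule.exists_le_ker_of_lt_top _ hd.lt_top
    refine (finrank_add_finrank_le_of_mul_le_ker (injective_productForm hmin hη hker) ?_).trans_eq
      (finrank_pow_succ_of_minimal hone hn hd hmin).symm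
    rwa [← pow_add, hij]

theorem exists_quotient_minimal {S : Submodule K O} (hS : S ≠ ⊤) :
    ∃ a : Ideal O, S.map (Ideal.Quotient.mkₐ K a).toLinearMap ≠ ⊤ ∧
      ∀ b : Ideal (O ⧸ a), b ≠ ⊥ →
        S.map (Ideal.Quotient.mkₐ K a).toLinearMap ⊔ b.restrictScalars K = ⊤ := by
  have : IsNoetherianRing O := isNoetherian_of_tower K inferInstance
  obtain ⟨a, ha, hmax⟩ := set_has_maximal_iff_noetherian.mpr this
    {a : Ideal O | S ⊔ a.restrictScalars K ≠ ⊤} ⟨⊥, by simpa using hS⟩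
  have hsurj := Ideal.Quotient.mkₐ_surjective K a
  set π := Ideal.Quotient.mkₐ K a
  have hker : LinearMap.ker π.toLinearMap = a.restrictScalars K := by
    ext x
    exact Ideal.Quotient.eq_zero_iff_mem
  refine ⟨a, fun htop => ha ?_, fun b hb => ?_⟩
  · rw [← hker, ← Submodule.comap_map_eq, htop, Submodule.comap_top]
  · have hcomap : S ⊔ (b.comap π).restrictScalars K = ⊤ := by
      by_contra hne
      have hle : a ≤ b.comap π := fun x hx => by
        have hx0 : π x = 0 := Ideal.Quotient.eq_zero_iff_mem.mpr hx
        exact Ideal.mem_comap.mpr (hx0 ▸ b.zero_mem)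
      have heq : a = b.comap π := hle.eq_of_not_lt (hmax _ hne)
      refine hb (eq_bot_iff.mpr ?_)
      rw [← Ideal.map_comap_of_surjective π hsurj b, ← heq]
      exact (Ideal.map_quotient_self a).le
    have hmap := congrArg (Submodule.map π.toLinearMap) hcomap
    rw [Submodule.map_sup, Submodule.map_top, LinearMap.range_eq_top.mpr hsurj] at hmap
    refine top_le_iff.mp (hmap.ge.trans (sup_le_sup le_rfl ?_))
    rintro _ ⟨x, hx, rfl⟩
    exact hx

theorem exists_quotient_finrank_le [IsAlgClosed K] (hone : 1 ∈ V) {n : ℕ} (hn : V ^ n = ⊤)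
    (hd : V ^ d ≠ ⊤) (hlt : finrank K O < 3 * d) :
    ∃ a : Ideal O, letI S := V.map (Ideal.Quotient.mkₐ K a).toLinearMap
      (finrank K S = 2 ∧ d + 2 ≤ finrank K (O ⧸ a)) ∨
      (finrank K S = 3 ∧ finrank K ↥(S ^ 2) ≤ 5 ∧ 2 * d + 2 ≤ finrank K (O ⧸ a)) := by
  obtain ⟨a, hda, hmin⟩ := exists_quotient_minimal hd
  refine ⟨a, ?_⟩
  have hsurj := Ideal.Quotient.mkₐ_surjective K a
  have hle : finrank K (O ⧸ a) ≤ finrank K O :=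
    LinearMap.finrank_le_finrank_of_surjective (f := (Ideal.Quotient.mkₐ K a).toLinearMap) hsurj
  set π := Ideal.Quotient.mkₐ K a
  have hna : V.map π.toLinearMap ^ n = ⊤ := by
    rw [← Submodule.map_pow, hn, Submodule.map_top, LinearMap.range_eq_top.mpr hsurj]
  have honea : 1 ∈ V.map π.toLinearMap := ⟨1, hone, map_one π⟩
  rw [Submodule.map_pow] at hda hmin
  have hlast := finrank_pow_succ_of_minimal honea hna hda hmin
  have hgrowth := (criticalGrowth_finrank_pow honea hna hda hmin).line_or_conic
    (hlast.trans_le hle |>.trans_lt hlt)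
  simp only [hlast] at hgrowth
  rwa [pow_one] at hgrowth

end CriticalAlgebra

section Polynomials

theorem aeval_const_mul_of_isHomogeneous {σ R S : Type*} [CommSemiring R] [CommSemiring S]
    [Algebra R S] {f : MvPolynomial σ R} {n : ℕ} (hf : f.IsHomogeneous n) (c : S) (g : σ → S) :
    aeval (fun i => c * g i) f = c ^ n * aeval g f := by
  simp only [aeval_def, eval₂_eq, Finset.mul_sum]
  refine Finset.sum_congr rfl fun s hs => ?_
  have hdeg : ∑ i ∈ s.support, s i = n := (hf.degree_eq_sum_deg_support hs).symm
  rw [← hdeg, ← Finset.prod_pow_eq_pow_sum]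
  simp only [mul_pow, Finset.prod_mul_distrib]
  exact mul_left_comm _ _ _

variable {K σ τ : Type*} [Field K]

instance finiteDimensional_homogeneousSubmodule [Finite σ] (t : ℕ) :
    FiniteDimensional K (homogeneousSubmodule σ K t) :=
  Module.Finite.iff_fg.mpr (homogeneousSubmodule_fg σ K t)

theorem finrank_homogeneousSubmodule_fin (r t : ℕ) :
    finrank K (homogeneousSubmodule (Fin (r + 1)) K t) = (r + t).choose t := by
  have hmonomials : {s : Fin (r + 1) →₀ ℕ | s.degree = t} =
      ((Finset.univ : Finset (Fin (r + 1))).finsuppAntidiag t : Set _) := by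
    ext s
    simp [Finset.mem_finsuppAntidiag, Finsupp.degree_eq_sum]
  have hsupp : homogeneousSubmodule (Fin (r + 1)) K t = restrictSupport K {s | s.degree = t} :=
    homogeneousSubmodule_eq_finsupp_supported _ _ _
  rw [hsupp, finrank_eq_nat_card_basis (basisRestrictSupport K _), hmonomials,
    Nat.card_coe_set_eq, Set.ncard_coe_finset, Finset.card_finsuppAntidiag_nat_eq_choose,
    Finset.card_univ, Fintype.card_fin, Nat.add_right_comm, Nat.add_sub_cancel]

variable [Fintype τ]

/-- The linear substitution `X i ↦ ∑ j, M i j * X j`: the pullback of polynomial functions along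
`y ↦ M *ᵥ y`. -/
noncomputable def linearSubst (M : Matrix σ τ K) : MvPolynomial σ K →ₐ[K] MvPolynomial τ K :=
  bind₁ M.toMvPolynomial

theorem isHomogeneous_linearSubst (M : Matrix σ τ K) {f : MvPolynomial σ K} {t : ℕ}
    (hf : f.IsHomogeneous t) : (linearSubst M f).IsHomogeneous t :=
  one_mul t ▸ hf.aeval _ M.toMvPolynomial_isHomogeneous

theorem eval_linearSubst (M : Matrix σ τ K) (y : τ → K) (f : MvPolynomial σ K) :
    eval y (linearSubst M f) = eval (M.mulVec y) f := by
  rw [linearSubst, eval, eval₂Hom_bind₁]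
  exact congrArg (eval · f) (funext fun i => M.toMvPolynomial_eval_eq_apply i y)

theorem linearSubst_linearSubst_of_mul_eq_one [Fintype σ] [DecidableEq τ] {M : Matrix σ τ K}
    {N : Matrix τ σ K} (hNM : N * M = 1) (f : MvPolynomial τ K) :
    linearSubst M (linearSubst N f) = f := by
  simp only [linearSubst, bind₁_bind₁, ← Matrix.toMvPolynomial_mul, hNM,
    Matrix.toMvPolynomial_one]
  exact aeval_X_left_apply f

end Polynomials

section HomogeneousKernel

variable {K : Type} [Field K] {m : ℕ} {O : Type*} [CommRing O] [Algebra K O]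

/-- The map `f ↦ ∑ n, φ (f_n) * X ^ n` into `O[X]`, where `f_n` is the degree `n` component of
`f`: the graded lift of a map `φ` of ungraded algebras. -/
noncomputable def homogenize (φ : PR K m →ₐ[K] O) : PR K m →ₐ[K] Polynomial O :=
  aeval fun i => Polynomial.X * Polynomial.C (φ (X i))

theorem homogenize_of_isHomogeneous (φ : PR K m →ₐ[K] O) {f : PR K m} {t : ℕ}
    (hf : f.IsHomogeneous t) : homogenize φ f = Polynomial.X ^ t * Polynomial.C (φ f) := by
  have hC : aeval (fun i => Polynomial.C (φ (X i))) =
      ((Polynomial.CAlgHom (R := O) (A := O)).restrictScalars K).comp φ :=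
    algHom_ext fun i => by simp
  rw [homogenize, aeval_const_mul_of_isHomogeneous hf, hC]
  rfl

theorem coeff_homogenize (φ : PR K m →ₐ[K] O) (f : PR K m) (n : ℕ) :
    (homogenize φ f).coeff n = φ (homogeneousComponent n f) := by
  have hcoeff : ∀ i, (homogenize φ (homogeneousComponent i f)).coeff n =
      if n = i then φ (homogeneousComponent i f) else 0 := fun i => by
    rw [homogenize_of_isHomogeneous φ (homogeneousComponent_isHomogeneous i f), mul_comm,
      Polynomial.coeff_C_mul_X_pow]
  conv_lhs => rw [← sum_homogeneousComponent f, map_sum, Polynomial.finsetSum_coeff]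
  simp only [hcoeff, Finset.sum_ite_eq, Finset.mem_range, Nat.lt_succ_iff]
  split_ifs with hn
  · rfl
  · rw [homogeneousComponent_eq_zero n f (not_le.mp hn), map_zero]

/-- The ideal generated by the homogeneous elements of the kernel of `φ`. When `φ` sends a linear
form to `1`, it is the saturated ideal of the scheme-theoretic image of `Spec O` in `ℙ^m`. -/
noncomputable def homogKer (φ : PR K m →ₐ[K] O) : Ideal (PR K m) := RingHom.ker (homogenize φ)

variable {φ : PR K m →ₐ[K] O}

theorem mem_homogKer {f : PR K m} :
    f ∈ homogKer φ ↔ ∀ n, φ (homogeneousComponent n f) = 0 := by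
  simp only [homogKer, RingHom.mem_ker, Polynomial.ext_iff, coeff_homogenize,
    Polynomial.coeff_zero]

theorem mem_homogKer_of_isHomogeneous {f : PR K m} {t : ℕ} (hf : f.IsHomogeneous t) :
    f ∈ homogKer φ ↔ φ f = 0 := by
  rw [homogKer, RingHom.mem_ker, homogenize_of_isHomogeneous φ hf,
    Polynomial.monic_X_pow t |>.mul_right_eq_zero_iff, Polynomial.C_eq_zero]

theorem isHomogI_homogKer (φ : PR K m →ₐ[K] O) : IsHomogI (homogKer φ) := fun f hf n =>
  (mem_homogKer_of_isHomogeneous (homogeneousComponent_isHomogeneous n f)).mpr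
    (mem_homogKer.mp hf n)

theorem isSatI_homogKer (hone : 1 ∈ (Hd K m 1).map φ.toLinearMap) : IsSatI (homogKer φ) := by
  intro f hf
  obtain ⟨l, hl, hφl⟩ := hone
  have hspan : Hd K m 1 ≤ ((homogKer φ).colon {f}).restrictScalars K := by
    rw [Hd, homogeneousSubmodule_one_eq_span_X, Submodule.span_le]
    rintro _ ⟨i, rfl⟩
    exact Submodule.mem_colon_singleton.mpr (hf i)
  have hlf : homogenize φ (l * f) = 0 := Submodule.mem_colon_singleton.mp (hspan hl)
  have hφl : φ l = 1 := hφl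
  rwa [map_mul, homogenize_of_isHomogeneous φ hl, hφl, map_one, mul_one,
    Polynomial.monic_X_pow 1 |>.mul_right_eq_zero_iff] at hlf

theorem homogKer_le_homogKer_comp {O' : Type*} [CommRing O'] [Algebra K O'] (ψ : O →ₐ[K] O') :
    homogKer φ ≤ homogKer (ψ.comp φ) := fun _ hf =>
  mem_homogKer.mpr fun n => (congrArg ψ (mem_homogKer.mp hf n)).trans (map_zero ψ)

theorem homogKer_mkₐ_eq {I A : Ideal (PR K m)} (hI : IsHomogI I)
    (hA : ∀ t f, f.IsHomogeneous t → (f ∈ A ↔ f ∈ I)) :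
    homogKer (Ideal.Quotient.mkₐ K A) = I := by
  have hmem : ∀ f n, Ideal.Quotient.mkₐ K A (homogeneousComponent n f) = 0 ↔
      homogeneousComponent n f ∈ I := fun f n =>
    Ideal.Quotient.eq_zero_iff_mem.trans (hA n _ (homogeneousComponent_isHomogeneous n f))
  ext f
  simp only [mem_homogKer, hmem]
  refine ⟨fun hf => ?_, hI f⟩
  rw [← sum_homogeneousComponent f]
  exact I.sum_mem fun n _ => hf n

end HomogeneousKernel

section HilbertFunction

theorem finrank_map_le_finrank_map {K M N N' : Type*} [Field K] [AddCommGroup M] [Module K M]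
    [AddCommGroup N] [Module K N] [AddCommGroup N'] [Module K N'] {S : Submodule K M}
    [FiniteDimensional K S] {f : M →ₗ[K] N} {g : M →ₗ[K] N'} (h : ∀ x ∈ S, g x = 0 → f x = 0) :
    finrank K (S.map f) ≤ finrank K (S.map g) := by
  have hf := (f.domRestrict S).finrank_range_add_finrank_ker
  have hg := (g.domRestrict S).finrank_range_add_finrank_ker
  rw [LinearMap.range_domRestrict] at hf hg
  have hker : LinearMap.ker (g.domRestrict S) ≤ LinearMap.ker (f.domRestrict S) :=
    fun x hx => h x x.2 hx
  have := Submodule.finrank_mono hker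
  omega

variable {K : Type} [Field K] {m : ℕ} {I J : Ideal (PR K m)} {t : ℕ}

section

variable {N : Type*} [AddCommGroup N] [Module K N] {g : PR K m →ₗ[K] N}

theorem hilbQ_le_finrank_map (h : ∀ f, f.IsHomogeneous t → g f = 0 → f ∈ J) :
    hilbQ J t ≤ finrank K ((Hd K m t).map g) :=
  finrank_map_le_finrank_map fun f hf hgf => Ideal.Quotient.eq_zero_iff_mem.mpr (h f hf hgf)

theorem finrank_map_le_hilbQ (h : ∀ f, f.IsHomogeneous t → f ∈ J → g f = 0) :
    finrank K ((Hd K m t).map g) ≤ hilbQ J t :=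
  finrank_map_le_finrank_map fun f hf hfJ => h f hf (Ideal.Quotient.eq_zero_iff_mem.mp hfJ)

end

theorem hilbQ_anti (h : I ≤ J) (t : ℕ) : hilbQ J t ≤ hilbQ I t :=
  hilbQ_le_finrank_map fun _ _ hf => h (Ideal.Quotient.eq_zero_iff_mem.mp hf)

theorem hilbQ_le_choose (J : Ideal (PR K m)) (t : ℕ) : hilbQ J t ≤ (m + t).choose t :=
  (Submodule.finrank_map_le _ _).trans_eq (finrank_homogeneousSubmodule_fin m t)

theorem hilbQ_add_choose_le {q : PR K m} {e : ℕ} (hq : q.IsHomogeneous e) (hq0 : q ≠ 0)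
    (hqJ : q ∈ J) (t : ℕ) :
    hilbQ J (e + t) + (m + t).choose t ≤ (m + (e + t)).choose (e + t) := by
  have hmul : (Hd K m t).map (LinearMap.mulLeft K q) ≤
      (LinearMap.ker ((Ideal.Quotient.mkₐ K J).toLinearMap.domRestrict (Hd K m (e + t)))).map
        (Hd K m (e + t)).subtype := by
    rintro _ ⟨f, hf, rfl⟩
    exact ⟨⟨q * f, hq.mul hf⟩, Ideal.Quotient.eq_zero_iff_mem.mpr (J.mul_mem_right f hqJ), rfl⟩
  have hdim := Submodule.finrank_mono hmul
  rw [Submodule.finrank_map_subtype_eq,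
    ← (Submodule.equivMapOfInjective _ (mul_right_injective₀ hq0) (Hd K m t)).finrank_eq,
    finrank_homogeneousSubmodule_fin] at hdim
  have hrank := LinearMap.finrank_range_add_finrank_ker
    ((Ideal.Quotient.mkₐ K J).toLinearMap.domRestrict (Hd K m (e + t)))
  rw [LinearMap.range_domRestrict, finrank_homogeneousSubmodule_fin] at hrank
  exact hrank ▸ Nat.add_le_add_left hdim _

end HilbertFunction

section LinearImage

variable {K : Type} [Field K] {m : ℕ} {O : Type*} [CommRing O] [Algebra K O]
  {φ : PR K m →ₐ[K] O}

/-- The image of the space of linear forms; its powers are the images of the spaces of forms of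
higher degree. -/
noncomputable def linearImage (φ : PR K m →ₐ[K] O) : Submodule K O := (Hd K m 1).map φ.toLinearMap

theorem linearImage_pow (φ : PR K m →ₐ[K] O) (t : ℕ) :
    linearImage φ ^ t = (Hd K m t).map φ.toLinearMap := by
  rw [linearImage, ← Submodule.map_pow, Hd, homogeneousSubmodule_one_pow]

theorem linearImage_eq_span (φ : PR K m →ₐ[K] O) :
    linearImage φ = Submodule.span K (Set.range fun i => φ (X i)) := by
  rw [linearImage, Hd, homogeneousSubmodule_one_eq_span_X, Submodule.map_span, ← Set.range_comp]
  rfl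

instance finiteDimensional_linearImage (φ : PR K m →ₐ[K] O) :
    FiniteDimensional K (linearImage φ) :=
  inferInstanceAs (FiniteDimensional K ((Hd K m 1).map φ.toLinearMap))

instance finiteDimensional_linearImage_pow (φ : PR K m →ₐ[K] O) (t : ℕ) :
    FiniteDimensional K ↥(linearImage φ ^ t) :=
  Module.Finite.iff_fg.mpr ((Module.Finite.iff_fg.mp inferInstance).pow t)

theorem map_linearImage {O' : Type*} [CommRing O'] [Algebra K O'] (ψ : O →ₐ[K] O') :
    (linearImage φ).map ψ.toLinearMap = linearImage (ψ.comp φ) :=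
  (Submodule.map_comp _ _ _).symm

theorem apply_X_mem_linearImage (φ : PR K m →ₐ[K] O) (i : Fin (m + 1)) :
    φ (X i) ∈ linearImage φ := ⟨X i, isHomogeneous_X K i, rfl⟩

theorem hilbQ_homogKer (φ : PR K m →ₐ[K] O) (t : ℕ) :
    hilbQ (homogKer φ) t = finrank K ↥(linearImage φ ^ t) := by
  rw [linearImage_pow]
  exact le_antisymm
    (hilbQ_le_finrank_map fun _ hf => (mem_homogKer_of_isHomogeneous hf).mpr)
    (finrank_map_le_hilbQ fun _ hf => (mem_homogKer_of_isHomogeneous hf).mp)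

theorem exists_linearImage_pow_eq_top (hφ : Function.Surjective φ) (hone : 1 ∈ linearImage φ)
    (hzd : IsZeroDimI (homogKer φ)) : ∃ n, linearImage φ ^ n = ⊤ := by
  obtain ⟨c, hc⟩ := hzd
  simp only [hilbQ_homogKer] at hc
  obtain ⟨n, hn⟩ : ∃ n, ∀ t, finrank K ↥(linearImage φ ^ t) ≤ finrank K ↥(linearImage φ ^ n) := by
    have hbdd : BddAbove (Set.range fun t => finrank K ↥(linearImage φ ^ t)) :=
      ⟨c, Set.forall_mem_range.mpr hc⟩
    obtain ⟨n, hn⟩ := Nat.sSup_mem (Set.range_nonempty _) hbdd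
    exact ⟨n, fun t => (le_csSup hbdd ⟨t, rfl⟩).trans_eq hn.symm⟩
  have hle : ∀ t, linearImage φ ^ t ≤ linearImage φ ^ n := fun t => by
    rw [Submodule.eq_of_le_of_finrank_le (pow_le_pow_of_one_mem hone (le_max_left n t)) (hn _)]
    exact pow_le_pow_of_one_mem hone (le_max_right n t)
  refine ⟨n, top_le_iff.mp fun x _ => ?_⟩
  obtain ⟨f, rfl⟩ := hφ x
  rw [← sum_homogeneousComponent f, map_sum]
  refine Submodule.sum_mem _ fun t _ => hle t ?_
  rw [linearImage_pow]
  exact ⟨_, homogeneousComponent_isHomogeneous t f, rfl⟩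

theorem finiteDimensional_of_linearImage_pow_eq_top {n : ℕ} (hn : linearImage φ ^ n = ⊤) :
    FiniteDimensional K O := by
  have := finiteDimensional_linearImage_pow φ n
  rw [hn] at this
  exact Module.finite_def.mpr (Module.Finite.iff_fg.mp this)

theorem linearImage_pow_eq_top_of_le (hone : 1 ∈ linearImage φ) {n t : ℕ}
    (hn : linearImage φ ^ n = ⊤) (hnt : n ≤ t) : linearImage φ ^ t = ⊤ :=
  top_le_iff.mp (hn.ge.trans (pow_le_pow_of_one_mem hone hnt))

theorem idealDeg_homogKer (hone : 1 ∈ linearImage φ) {n : ℕ} (hn : linearImage φ ^ n = ⊤) :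
    idealDeg (homogKer φ) = finrank K O := by
  have hev : hilbQ (homogKer φ) =ᶠ[Filter.atTop] fun _ => finrank K O := by
    filter_upwards [Filter.eventually_ge_atTop n] with t ht
    rw [hilbQ_homogKer, linearImage_pow_eq_top_of_le hone hn ht, finrank_top]
  exact (Filter.limsup_congr hev).trans (Filter.limsup_const _)

theorem h1I_homogKer_pos_iff (hone : 1 ∈ linearImage φ) {n : ℕ} (hn : linearImage φ ^ n = ⊤)
    (d : ℕ) : 0 < h1I (homogKer φ) d ↔ linearImage φ ^ d ≠ ⊤ := by
  have := finiteDimensional_of_linearImage_pow_eq_top hn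
  rw [h1I, idealDeg_homogKer hone hn, hilbQ_homogKer, Nat.sub_pos_iff_lt]
  exact ⟨fun hlt htop => hlt.ne (by rw [htop, finrank_top]), Submodule.finrank_lt⟩

theorem idealDeg_anti {I J : Ideal (PR K m)} (hzd : IsZeroDimI I) (h : I ≤ J) :
    idealDeg J ≤ idealDeg I := by
  obtain ⟨c, hc⟩ := hzd
  exact Filter.limsup_le_limsup (.of_forall (hilbQ_anti h)) Filter.isCobounded_le_of_bot
    (Filter.isBoundedUnder_of ⟨c, hc⟩)

theorem idealDeg_le_hilbQ (hone : 1 ∈ linearImage φ) {d : ℕ} (hd : linearImage φ ^ d = ⊤)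
    {J : Ideal (PR K m)} (hJ : homogKer φ ≤ J) : idealDeg J ≤ hilbQ J d := by
  obtain ⟨l, hl, hφl⟩ := hone
  have hφl : φ l = 1 := hφl
  refine Filter.limsup_le_of_le Filter.isCobounded_le_of_bot ?_
  filter_upwards [Filter.eventually_ge_atTop d] with t ht
  obtain ⟨e, rfl⟩ := Nat.exists_eq_add_of_le' ht
  set π := Ideal.Quotient.mkₐ K J
  -- Modulo `homogKer φ`, a form of degree `e + d` is `l ^ e` times a form of degree `d`.
  have hle : (Hd K m (e + d)).map π.toLinearMap ≤
      ((Hd K m d).map π.toLinearMap).map (LinearMap.mulLeft K (π (l ^ e))) := by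
    rintro _ ⟨f, hf, rfl⟩
    obtain ⟨g, hg, hgf⟩ : φ f ∈ (Hd K m d).map φ.toLinearMap := by
      rw [← linearImage_pow, hd]
      trivial
    have hlg : (l ^ e * g).IsHomogeneous (e + d) := by
      simpa only [one_mul] using (hl.pow e).mul hg
    have hker : l ^ e * g - f ∈ homogKer φ := by
      rw [mem_homogKer_of_isHomogeneous (hlg.sub hf), map_sub, map_mul, map_pow, hφl, one_pow,
        one_mul, sub_eq_zero]
      exact hgf
    exact ⟨_, ⟨g, hg, rfl⟩, (map_mul π _ _).symm.trans (Ideal.Quotient.eq.mpr (hJ hker))⟩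
  exact (Submodule.finrank_mono hle).trans (Submodule.finrank_map_le _ _)

end LinearImage

section Dehomogenization

variable {K : Type} [Field K] {m : ℕ} {I : Ideal (PR K m)}

theorem exists_X_notMem_of_mem_associatedPrimes (hI : IsSatI I) {P : Ideal (PR K m)}
    (hP : P ∈ associatedPrimes (PR K m) (PR K m ⧸ I)) : ∃ i, X i ∉ P := by
  by_contra! hX
  rw [AssociatedPrimes.mem_iff, isAssociatedPrime_iff] at hP
  obtain ⟨hprime, x, hx⟩ := hP
  obtain ⟨f, rfl⟩ := Ideal.Quotient.mk_surjective x
  have hcolon : ∀ g, g ∈ P ↔ g * f ∈ I := fun g => by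
    rw [hx, Submodule.mem_colon_singleton, Submodule.mem_bot, ← Ideal.Quotient.eq_zero_iff_mem,
      map_mul]
    rfl
  refine hprime.ne_top ((Ideal.eq_top_iff_one P).mpr ((hcolon 1).mpr ?_))
  rw [one_mul]
  exact hI f fun i => (hcolon _).mp (hX i)

theorem exists_isHomogeneous_one_mk_mem_nonZeroDivisors [Infinite K] (hI : IsSatI I) :
    ∃ l : PR K m, l.IsHomogeneous 1 ∧ Ideal.Quotient.mk I l ∈ nonZeroDivisors (PR K m ⧸ I) := by
  have : Finite (associatedPrimes (PR K m) (PR K m ⧸ I)) := associatedPrimes.finite _ _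
  by_contra! hzero
  have hcover : ⋃ P : associatedPrimes (PR K m) (PR K m ⧸ I),
      (((P : Ideal (PR K m)).restrictScalars K).comap (Hd K m 1).subtype : Set (Hd K m 1)) =
        Set.univ := by
    refine Set.eq_univ_of_forall fun l => ?_
    have hl := hzero l l.2
    simp only [mem_nonZeroDivisors_iff_left, not_forall] at hl
    obtain ⟨x, hx, hx0⟩ := hl
    have hmem : (l : PR K m) ∈
        ⋃ P ∈ associatedPrimes (PR K m) (PR K m ⧸ I), (P : Set (PR K m)) := by
      rw [biUnion_associatedPrimes_eq_zero_divisors]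
      exact ⟨x, hx0, hx⟩
    obtain ⟨P, hP, hlP⟩ := Set.mem_iUnion₂.mp hmem
    exact Set.mem_iUnion.mpr ⟨⟨P, hP⟩, hlP⟩
  obtain ⟨⟨P, hP⟩, htop⟩ := Subspace.exists_eq_top_of_iUnion_eq_univ hcover
  obtain ⟨i, hi⟩ := exists_X_notMem_of_mem_associatedPrimes hI hP
  exact hi (htop.ge (Submodule.mem_top (x := ⟨X i, isHomogeneous_X K i⟩)))

theorem exists_homogKer_mkₐ_eq [Infinite K] (hhom : IsHomogI I) (hsat : IsSatI I) :
    ∃ A : Ideal (PR K m), 1 ∈ linearImage (Ideal.Quotient.mkₐ K A) ∧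
      homogKer (Ideal.Quotient.mkₐ K A) = I := by
  obtain ⟨l, hl, hnzd⟩ := exists_isHomogeneous_one_mk_mem_nonZeroDivisors hsat
  let L := Localization.Away (Ideal.Quotient.mk I l)
  have hinj : Function.Injective (algebraMap (PR K m ⧸ I) L) :=
    IsLocalization.injective L (Submonoid.powers_le.mpr hnzd)
  let α : PR K m →ₐ[K] L := (Algebra.algHom K (PR K m ⧸ I) L).comp (Ideal.Quotient.mkₐ K I)
  let u : L := IsLocalization.Away.invSelf (Ideal.Quotient.mk I l)
  have hu : u * α l = 1 := (mul_comm _ _).trans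
    (IsLocalization.Away.mul_invSelf (Ideal.Quotient.mk I l))
  have hα : ∀ f, α f = 0 ↔ f ∈ I := fun f =>
    (map_eq_zero_iff _ hinj).trans Ideal.Quotient.eq_zero_iff_mem
  -- The chart `l ≠ 0`: a form `f` of degree `t` becomes the function `f / l ^ t`.
  let θ : PR K m →ₐ[K] L := aeval fun i => u * α (X i)
  have hθ : ∀ {t f}, f.IsHomogeneous t → θ f = u ^ t * α f := fun hf => by
    rw [aeval_const_mul_of_isHomogeneous hf]
    exact congrArg _ (DFunLike.congr_fun (aeval_unique α).symm _)
  refine ⟨RingHom.ker θ, ⟨l, hl, ?_⟩, homogKer_mkₐ_eq hhom fun t f hf => ?_⟩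
  · refine Ideal.Quotient.eq.mpr ?_
    rw [RingHom.mem_ker, map_sub, map_one, hθ hl, pow_one, hu, sub_self]
  · rw [RingHom.mem_ker, hθ hf, ((IsUnit.of_mul_eq_one _ hu).pow t).mul_right_eq_zero, hα]

end Dehomogenization

section LinearSubspaces

variable {K : Type} [Field K] {m r : ℕ}

/-- The ideal of the linear subspace `ℙ(W)` of `ℙ^m`. -/
noncomputable abbrev linearIdeal (W : Submodule K (Fin (m + 1) → K)) : Ideal (PR K m) :=
  idealOfSet {a : Pm K m | a.submodule ≤ W}

theorem eval_rep_mk_eq_zero_iff {f : PR K m} {t : ℕ} (hf : f.IsHomogeneous t)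
    {v : Fin (m + 1) → K} (hv : v ≠ 0) :
    eval (Projectivization.mk K v hv).rep f = 0 ↔ eval v f = 0 := by
  obtain ⟨c, hc⟩ := Projectivization.exists_smul_eq_mk_rep K v hv
  have hscale : eval (Projectivization.mk K v hv).rep f = (c : K) ^ t * eval v f := by
    rw [← hc]
    exact aeval_const_mul_of_isHomogeneous hf (c : K) v
  rw [hscale, mul_eq_zero_iff_left (pow_ne_zero t c.ne_zero)]

theorem mem_linearIdeal_of_linearSubst_eq_zero (M : Matrix (Fin (m + 1)) (Fin r) K) {f : PR K m}
    {t : ℕ} (hf : f.IsHomogeneous t) (h0 : linearSubst M f = 0) :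
    f ∈ linearIdeal (LinearMap.range M.mulVecLin) := by
  refine Ideal.subset_span ⟨⟨t, hf⟩, fun a ha => ?_⟩
  obtain ⟨y, hy⟩ := ha (a.submodule_eq ▸ Submodule.mem_span_singleton_self a.rep)
  rw [← hy, Matrix.mulVecLin_apply, ← eval_linearSubst, h0, map_zero]

theorem linearIdeal_range_le_ker_linearSubst [Infinite K]
    {M : Matrix (Fin (m + 1)) (Fin (r + 1)) K} (hM : Function.Injective M.mulVec) :
    linearIdeal (LinearMap.range M.mulVecLin) ≤ RingHom.ker (linearSubst M) := by
  refine Ideal.span_le.mpr fun g ⟨⟨t, hg⟩, hvanish⟩ => ?_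
  -- The factor `X 0` disposes of `y = 0`, which is not a point of projective space.
  have hX : linearSubst M g * X 0 = 0 := MvPolynomial.funext fun y => by
    rw [map_mul, eval_linearSubst, eval_X, map_zero, mul_eq_zero, or_iff_not_imp_right]
    intro hy0
    have hv : M.mulVec y ≠ 0 := fun h =>
      hy0 (congrFun (hM (h.trans (Matrix.mulVec_zero M).symm)) 0)
    rw [← eval_rep_mk_eq_zero_iff hg hv]
    refine hvanish _ ?_
    rw [Set.mem_ofPred_eq, Projectivization.submodule_mk, Submodule.span_singleton_le_iff_mem]
    exact ⟨y, rfl⟩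
  exact (mul_eq_zero.mp hX).resolve_right (X_ne_zero 0)

theorem mulVec_injective_of_mul_eq_one {σ τ : Type*} [Fintype σ] [Fintype τ] [DecidableEq τ]
    {M : Matrix σ τ K} {N : Matrix τ σ K} (hNM : N * M = 1) : Function.Injective M.mulVec :=
  Function.LeftInverse.injective (g := N.mulVec) fun y => by
    rw [Matrix.mulVec_mulVec, hNM, Matrix.one_mulVec]

theorem exists_range_mulVecLin_eq {W : Submodule K (Fin (m + 1) → K)} (hW : finrank K W = r) :
    ∃ (M : Matrix (Fin (m + 1)) (Fin r) K) (N : Matrix (Fin r) (Fin (m + 1)) K),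
      N * M = 1 ∧ LinearMap.range M.mulVecLin = W := by
  let e := (finBasisOfFinrankEq K W hW).equivFun.symm
  obtain ⟨g, hg⟩ := LinearMap.exists_leftInverse_of_injective (W.subtype ∘ₗ e.toLinearMap)
    (LinearMap.ker_eq_bot.mpr (W.subtype_injective.comp e.injective))
  refine ⟨LinearMap.toMatrix' (W.subtype ∘ₗ e.toLinearMap), LinearMap.toMatrix' g, ?_, ?_⟩
  · rw [← LinearMap.toMatrix'_comp, hg, LinearMap.toMatrix'_id]
  · rw [← Matrix.toLin'_apply', Matrix.toLin'_toMatrix', LinearMap.range_comp,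
      LinearEquiv.range, Submodule.map_subtype_top]

variable {W : Submodule K (Fin (m + 1) → K)} {J : Ideal (PR K m)}

theorem sub_linearSubst_linearSubst_mem_linearIdeal {M : Matrix (Fin (m + 1)) (Fin r) K}
    {N : Matrix (Fin r) (Fin (m + 1)) K} (hNM : N * M = 1) {f : PR K m} {t : ℕ}
    (hf : f.IsHomogeneous t) :
    f - linearSubst N (linearSubst M f) ∈ linearIdeal (LinearMap.range M.mulVecLin) := by
  refine mem_linearIdeal_of_linearSubst_eq_zero M
    (hf.sub (isHomogeneous_linearSubst N (isHomogeneous_linearSubst M hf))) ?_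
  rw [map_sub, linearSubst_linearSubst_of_mul_eq_one hNM, sub_self]

theorem hilbQ_le_hilbQ_comap_linearSubst {M : Matrix (Fin (m + 1)) (Fin (r + 1)) K}
    {N : Matrix (Fin (r + 1)) (Fin (m + 1)) K} (hNM : N * M = 1)
    (hJ : linearIdeal (LinearMap.range M.mulVecLin) ≤ J) (t : ℕ) :
    hilbQ J t ≤ hilbQ (J.comap (linearSubst N)) t := by
  let π := Ideal.Quotient.mkₐ K (J.comap (linearSubst N))
  refine (hilbQ_le_finrank_map (g := π.toLinearMap ∘ₗ (linearSubst M).toLinearMap)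
    fun f hf hf0 => ?_).trans (Submodule.finrank_mono ?_)
  · have hmem : linearSubst M f ∈ J.comap (linearSubst N) := Ideal.Quotient.eq_zero_iff_mem.mp hf0
    exact (J.sub_mem_iff_left hmem).mp
      (hJ (sub_linearSubst_linearSubst_mem_linearIdeal hNM hf))
  · rw [Submodule.map_comp]
    exact Submodule.map_mono
      (Submodule.map_le_iff_le_comap.mpr fun f hf => isHomogeneous_linearSubst M hf)

theorem hilbQ_linearIdeal [Infinite K] (hW : finrank K W = r + 1) (t : ℕ) :
    hilbQ (linearIdeal W) t = (r + t).choose t := by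
  obtain ⟨M, N, hNM, rfl⟩ := exists_range_mulVecLin_eq hW
  refine ((hilbQ_le_hilbQ_comap_linearSubst hNM le_rfl t).trans (hilbQ_le_choose _ t)).antisymm ?_
  rw [← finrank_homogeneousSubmodule_fin (K := K) r t]
  refine (Submodule.finrank_mono fun f hf => ?_).trans
    (finrank_map_le_hilbQ (g := (linearSubst M).toLinearMap) fun f _ hf =>
      linearIdeal_range_le_ker_linearSubst (mulVec_injective_of_mul_eq_one hNM) hf)
  exact ⟨linearSubst N f, isHomogeneous_linearSubst N hf,
    linearSubst_linearSubst_of_mul_eq_one hNM f⟩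

theorem hilbQ_add_choose_le_of_linearIdeal_le (hW : finrank K W = r + 1) {q : PR K m} {e : ℕ}
    (hq : q.IsHomogeneous e) (hqW : q ∉ linearIdeal W) (hWJ : linearIdeal W ≤ J) (hqJ : q ∈ J)
    (t : ℕ) : hilbQ J (e + t) + (r + t).choose t ≤ (r + (e + t)).choose (e + t) := by
  obtain ⟨M, N, hNM, rfl⟩ := exists_range_mulVecLin_eq hW
  refine (Nat.add_le_add_right (hilbQ_le_hilbQ_comap_linearSubst hNM hWJ _) _).trans
    (hilbQ_add_choose_le (isHomogeneous_linearSubst M hq)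
      (fun h0 => hqW (mem_linearIdeal_of_linearSubst_eq_zero M hq h0)) ?_ t)
  exact (J.sub_mem_iff_right hqJ).mp (hWJ (sub_linearSubst_linearSubst_mem_linearIdeal hNM hq))

theorem hilbQ_le_of_isLine [Infinite K] {L : Set (Pm K m)} (hL : IsLine L)
    (hJ : idealOfSet L ≤ J) (t : ℕ) : hilbQ J t ≤ t + 1 := by
  obtain ⟨W, hW, rfl⟩ := hL
  refine (hilbQ_anti hJ t).trans_eq ((hilbQ_linearIdeal hW t).trans ?_)
  rw [add_comm, Nat.choose_succ_self_right]

theorem le_satIdeal (J : Ideal (PR K m)) : J ≤ satIdeal J := le_sInf fun _ h => h.1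

theorem hilbQ_le_of_isConic [Infinite K] {C : Ideal (PR K m)} (hC : IsConic C) (hJ : C ≤ J)
    (t : ℕ) : hilbQ J t ≤ 2 * t + 1 := by
  obtain ⟨W, q, hW, hq, hqW, rfl⟩ := hC
  obtain ⟨hWJ, hqJ⟩ := sup_le_iff.mp ((le_satIdeal _).trans hJ)
  have hplane := (hilbQ_anti hWJ t).trans_eq (hilbQ_linearIdeal hW t)
  match t, hplane with
  | 0, hplane => exact hplane
  | 1, hplane => exact hplane
  | t + 2, _ =>
    have hquadric := hilbQ_add_choose_le_of_linearIdeal_le hW hq hqW hWJ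
      ((Ideal.span_singleton_le_iff_mem _).mp hqJ) t
    have hchoose : ∀ n, (2 + n).choose n = (n + 2).choose 2 := fun n => by
      rw [add_comm, Nat.choose_symm_add]
    have hpascal : (t + 4).choose 2 = (t + 2).choose 2 + (2 * t + 5) := by
      simp only [Nat.choose_succ_succ', Nat.choose_one_right, Nat.choose_zero_right,
        zero_add]
      ring
    rw [hchoose, hchoose, add_comm 2 t, hpascal] at hquadric
    omega

end LinearSubspaces

section SpannedSubspaces

variable {K : Type} [Field K] {m r : ℕ} {I J : Ideal (PR K m)}

theorem exists_eq_aeval_linearSubst {O : Type*} [CommRing O] [Algebra K O] {φ : PR K m →ₐ[K] O}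
    (hr : finrank K (linearImage φ) = r) :
    ∃ (M : Matrix (Fin (m + 1)) (Fin r) K) (N : Matrix (Fin r) (Fin (m + 1)) K) (b : Fin r → O),
      N * M = 1 ∧ ∀ f, φ f = aeval b (linearSubst M f) := by
  let x : Fin (m + 1) → linearImage φ := fun i => ⟨φ (X i), apply_X_mem_linearImage φ i⟩
  have hx : Function.Surjective (Fintype.linearCombination K x) := fun y => by
    obtain ⟨c, hc⟩ := (Submodule.mem_span_range_iff_exists_fun K).mp
      ((linearImage_eq_span φ).le y.2)
    exact ⟨c, Subtype.ext (by simpa [Fintype.linearCombination_apply, x] using hc)⟩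
  let b := finBasisOfFinrankEq K (linearImage φ) hr
  let p := b.equivFun.toLinearMap ∘ₗ Fintype.linearCombination K x
  obtain ⟨s, hs⟩ := p.exists_rightInverse_of_surjective
    (LinearMap.range_eq_top.mpr (b.equivFun.surjective.comp hx))
  let M := (LinearMap.toMatrix' p).transpose
  have hφ : φ = (aeval fun j => (b j : O)).comp (linearSubst M) := algHom_ext fun i => by
    have hM : ∀ j, M i j = b.repr (x i) j := fun j => by
      simp [M, p, LinearMap.toMatrix'_apply]
    have hsum : φ (X i) = ∑ j, b.repr (x i) j • (b j : O) :=
      (congrArg Subtype.val (b.sum_repr (x i)).symm).trans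
        (map_sum (linearImage φ).subtype _ _)
    simp [linearSubst, Matrix.toMvPolynomial, aeval_monomial, Algebra.smul_def, hM, hsum]
  refine ⟨M, (LinearMap.toMatrix' s).transpose, fun j => b j, ?_, DFunLike.congr_fun hφ⟩
  · rw [← Matrix.transpose_mul, ← LinearMap.toMatrix'_comp, hs, LinearMap.toMatrix'_id,
      Matrix.transpose_one]

theorem exists_linearIdeal_le [Infinite K] (hJ : hilbQ J 1 = r + 1) :
    ∃ W : Submodule K (Fin (m + 1) → K), finrank K W = r + 1 ∧ linearIdeal W ≤ J := by
  obtain ⟨M, N, b, hNM, hb⟩ := exists_eq_aeval_linearSubst (φ := Ideal.Quotient.mkₐ K J) hJ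
  have hinj := mulVec_injective_of_mul_eq_one hNM
  refine ⟨LinearMap.range M.mulVecLin, ?_, fun f hf => Ideal.Quotient.eq_zero_iff_mem.mp ?_⟩
  · rw [LinearMap.finrank_range_of_inj hinj, finrank_fin_fun]
  · have hker : linearSubst M f = 0 := linearIdeal_range_le_ker_linearSubst hinj hf
    exact (hb f).trans (by rw [hker, map_zero])

theorem exists_mem_notMem_of_hilbQ_lt {t : ℕ} (h : hilbQ J t < hilbQ I t) :
    ∃ q, q.IsHomogeneous t ∧ q ∈ J ∧ q ∉ I := by
  by_contra! hmem
  exact h.not_ge (hilbQ_le_finrank_map fun f hf hf0 =>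
    hmem f hf (Ideal.Quotient.eq_zero_iff_mem.mp hf0))

theorem exists_isLine_le [Infinite K] (hJ : hilbQ J 1 = 2) :
    ∃ L : Set (Pm K m), IsLine L ∧ idealOfSet L ≤ J := by
  obtain ⟨W, hW, hWJ⟩ := exists_linearIdeal_le hJ
  exact ⟨_, ⟨W, hW, rfl⟩, hWJ⟩

theorem exists_isConic_le [Infinite K] (hhom : IsHomogI J) (hsat : IsSatI J) (hJ1 : hilbQ J 1 = 3)
    (hJ2 : hilbQ J 2 ≤ 5) : ∃ C, IsConic C ∧ C ≤ J := by
  obtain ⟨W, hW, hWJ⟩ := exists_linearIdeal_le hJ1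
  obtain ⟨q, hq, hqJ, hqW⟩ : ∃ q, q.IsHomogeneous 2 ∧ q ∈ J ∧ q ∉ linearIdeal W := by
    refine exists_mem_notMem_of_hilbQ_lt (hJ2.trans_lt ?_)
    rw [hilbQ_linearIdeal hW]
    decide
  have hle : linearIdeal W ⊔ Ideal.span {q} ≤ J :=
    sup_le hWJ ((Ideal.span_singleton_le_iff_mem J).mpr hqJ)
  exact ⟨_, ⟨W, q, hW, hq, hqW, rfl⟩, sInf_le ⟨hle, hhom, hsat⟩⟩

theorem idealDeg_le_interDeg {C : Ideal (PR K m)} (hzd : IsZeroDimI I) (hC : C ≤ J) (hI : I ≤ J) :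
    idealDeg J ≤ interDeg C I := by
  obtain ⟨c, hc⟩ := hzd
  exact idealDeg_anti ⟨c, fun t => (hilbQ_anti le_sup_right t).trans (hc t)⟩ (sup_le hC hI)

theorem exists_homogKer_le_of_linearImage_pow_ne_top [IsAlgClosed K] {O : Type*} [CommRing O]
    [Algebra K O] {φ : PR K m →ₐ[K] O} (hone : 1 ∈ linearImage φ) {n d : ℕ}
    (hn : linearImage φ ^ n = ⊤) (hd : linearImage φ ^ d ≠ ⊤) (hlt : finrank K O < 3 * d) :
    ∃ J, homogKer φ ≤ J ∧ IsHomogI J ∧ IsSatI J ∧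
      ((hilbQ J 1 = 2 ∧ d + 2 ≤ idealDeg J) ∨
        (hilbQ J 1 = 3 ∧ hilbQ J 2 ≤ 5 ∧ 2 * d + 2 ≤ idealDeg J)) := by
  have := finiteDimensional_of_linearImage_pow_eq_top hn
  obtain ⟨a, ha⟩ := exists_quotient_finrank_le hone hn hd hlt
  let ψ := Ideal.Quotient.mkₐ K a
  have hmap : (linearImage φ).map ψ.toLinearMap = linearImage (ψ.comp φ) := map_linearImage ψ
  have hone' : 1 ∈ linearImage (ψ.comp φ) := hmap ▸ ⟨1, hone, map_one ψ⟩
  have hn' : linearImage (ψ.comp φ) ^ n = ⊤ := by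
    rw [← hmap, ← Submodule.map_pow, hn, Submodule.map_top, LinearMap.range_eq_top]
    exact Ideal.Quotient.mkₐ_surjective K a
  refine ⟨homogKer (ψ.comp φ), homogKer_le_homogKer_comp ψ, isHomogI_homogKer _,
    isSatI_homogKer hone', ?_⟩
  rwa [hilbQ_homogKer, hilbQ_homogKer, idealDeg_homogKer hone' hn', pow_one, ← hmap]

end SpannedSubspaces

end ZeroDimScheme

open ZeroDimScheme in
theorem stmt1_general (K : Type) [Field K] [IsAlgClosed K] (m d : ℕ) (Z : PSub K m)
    (hzd : IsZeroDimI Z.I) (hz : idealDeg Z.I < 3 * d) :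
    0 < h1I Z.I d ↔
      ((∃ L : Set (Pm K m), IsLine L ∧ d + 2 ≤ interDeg (idealOfSet L) Z.I) ∨
        (∃ J : Ideal (PR K m), IsConic J ∧ 2 * d + 2 ≤ interDeg J Z.I)) := by
  have : Infinite K := IsAlgClosed.instInfinite
  obtain ⟨A, hone, hA⟩ := exists_homogKer_mkₐ_eq Z.homog Z.sat
  rw [← hA] at hzd hz ⊢
  obtain ⟨n, hn⟩ := exists_linearImage_pow_eq_top (Ideal.Quotient.mkₐ_surjective K A) hone hzd
  rw [h1I_homogKer_pos_iff hone hn]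
  constructor
  · rw [idealDeg_homogKer hone hn] at hz
    intro hd
    obtain ⟨J, hZJ, hhom, hsat, ⟨hJ1, hdeg⟩ | ⟨hJ1, hJ2, hdeg⟩⟩ :=
      exists_homogKer_le_of_linearImage_pow_ne_top hone hn hd hz
    · obtain ⟨L, hL, hLJ⟩ := exists_isLine_le hJ1
      exact .inl ⟨L, hL, hdeg.trans (idealDeg_le_interDeg hzd hLJ hZJ)⟩
    · obtain ⟨C, hC, hCJ⟩ := exists_isConic_le hhom hsat hJ1 hJ2
      exact .inr ⟨C, hC, hdeg.trans (idealDeg_le_interDeg hzd hCJ hZJ)⟩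
  · rintro (⟨L, hL, hdeg⟩ | ⟨C, hC, hdeg⟩) hd
    · have hle := (idealDeg_le_hilbQ hone hd le_sup_right).trans
        (hilbQ_le_of_isLine hL le_sup_left d)
      exact absurd (hdeg.trans hle) (by omega)
    · have hle := (idealDeg_le_hilbQ hone hd le_sup_right).trans
        (hilbQ_le_of_isConic hC le_sup_left d)
      exact absurd (hdeg.trans hle) (by omega)

/-- Lemma 1 (`c0`): for a zero-dimensional scheme `Z ⊂ ℙ^m` of degree `z` with `0 < z < 3d`
(and `deg Z - deg Z_red ≤ d` when `m > 2`), one has `h^1(𝓘_Z(d)) > 0` iff there is a line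
`L` with `deg(L ∩ Z) ≥ d+2` or a conic `T` with `deg(T ∩ Z) ≥ 2d+2`. -/
theorem stmt1 (K : Type) [Field K] [IsAlgClosed K] [CharZero K]
    (m d z : ℕ) (hm : 2 ≤ m) (hz0 : 0 < z) (hz : z < 3 * d)
    (Z : PSub K m) (hzd : IsZeroDimI Z.I) (hdeg : idealDeg Z.I = z)
    (hred : 2 < m → idealDeg Z.I - (pzeroLocus Z.I).ncard ≤ d) :
    0 < h1I Z.I d ↔
      ((∃ L : Set (Pm K m), IsLine L ∧ d + 2 ≤ interDeg (idealOfSet L) Z.I) ∨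
        (∃ J : Ideal (PR K m), IsConic J ∧ 2 * d + 2 ≤ interDeg J Z.I)) :=
  stmt1_general K m d Z hzd (hdeg ▸ hz)
end

section
/- Fix P ∈ ℙ^n. Assume there exist zero-dimensional closed subschemes A, B ⊂ ℙ^m with A ≠ B such that P ∈ ⟨ν_d(A)⟩ ∩ ⟨ν_d(B)⟩, P ∉ ⟨ν_d(A')⟩ for every closed subscheme A' ⊊ A, and P ∉ ⟨ν_d(B')⟩ for every closed subscheme B' ⊊ B. Then h^1(I_{A∪B}(d)) > 0. -/
open scoped LinearAlgebra.Projectivization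

/-!
Suppose `h¹(𝓘_{A∪B}(d)) = 0`, so that the Hilbert function of `R/(I_A ∩ I_B)` is constant from
degree `d` on. Multiplication by a general linear form `ℓ` is injective on `R/I_A` and `R/I_B`, and
therefore bijective on `R/(I_A ∩ I_B)` in degrees `≥ d`. If `f` is a form of degree `d` in the ideal
of `A ∩ B`, the saturation of `I_A + I_B`, then `ℓ ^ k * f = a + b` with `a ∈ I_A`, `b ∈ I_B`;
dividing `a` by `ℓ ^ k` modulo `I_A ∩ I_B` shows `f ∈ I_A + I_B`. Dually, this is the Grassmann
formula `⟨ν_d(A)⟩ ∩ ⟨ν_d(B)⟩ = ⟨ν_d(A ∩ B)⟩`. So `P` lies in the span of `A ∩ B`, and minimality of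
`A` forces `A ⊆ B`, whence `A = B` by minimality of `B`.
-/

noncomputable section

open MvPolynomial

section CommRing

variable {R : Type*} [CommRing R] {I J Q : Ideal R}

lemma isSMulRegular_quotient_inf {f : R} (hI : IsSMulRegular (R ⧸ I) f)
    (hJ : IsSMulRegular (R ⧸ J) f) : IsSMulRegular (R ⧸ I ⊓ J) f := by
  rw [isSMulRegular_quotient_iff_mem_of_smul_mem] at hI hJ ⊢
  exact fun g hg => ⟨hI g hg.1, hJ g hg.2⟩

/-- The ideal `⋃ k, (Q : ℓ ^ k)` of elements lying in `Q` away from the hypersurface `ℓ = 0`,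
encoded as the contraction of the extension of `Q` to the localization at `ℓ`. -/
def awayIdeal (Q : Ideal R) (ℓ : R) : Ideal R :=
  (Q.map (algebraMap R (Localization.Away ℓ))).comap (algebraMap R (Localization.Away ℓ))

lemma mem_awayIdeal {ℓ f : R} : f ∈ awayIdeal Q ℓ ↔ ∃ k, ℓ ^ k * f ∈ Q := by
  rw [awayIdeal, Ideal.mem_comap,
    IsLocalization.algebraMap_mem_map_algebraMap_iff (Submonoid.powers ℓ)]
  simp only [Submonoid.mem_powers_iff, exists_exists_eq_and]

end CommRing

section LinearForms

variable {σ R : Type*}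

lemma homogeneousComponent_add_mul [CommSemiring R] {ℓ : MvPolynomial σ R} {k : ℕ}
    (hℓ : ℓ.IsHomogeneous k) (f : MvPolynomial σ R) (n : ℕ) :
    homogeneousComponent (k + n) (ℓ * f) = ℓ * homogeneousComponent n f := by
  let := gradedAlgebra (σ := σ) (R := R)
  have hcomp (g : MvPolynomial σ R) (i : ℕ) :
      (DirectSum.decompose (homogeneousSubmodule σ R) g i : MvPolynomial σ R) =
        homogeneousComponent i g := decomposition.decompose'_apply g i
  simpa only [hcomp] using
    DirectSum.coe_decompose_mul_add_of_left_mem (homogeneousSubmodule σ R) (b := f) (j := n) hℓ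

instance finite_homogeneousSubmodule [CommSemiring R] [Finite σ] (n : ℕ) :
    Module.Finite R (homogeneousSubmodule σ R n) :=
  Module.Finite.iff_fg.2 (homogeneousSubmodule_fg σ R n)

/-- The degree-`t` part `I_t` of `I`, as a subspace of the space of degree-`t` forms. -/
def gradedPart [CommSemiring R] (I : Ideal (MvPolynomial σ R)) (t : ℕ) :
    Submodule R (homogeneousSubmodule σ R t) :=
  (I.restrictScalars R).comap (homogeneousSubmodule σ R t).subtype

lemma gradedPart_mono [CommSemiring R] {I J : Ideal (MvPolynomial σ R)} (h : I ≤ J) (t : ℕ) :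
    gradedPart I t ≤ gradedPart J t := fun _ hf => h hf

lemma smul_eq_zero_of_forall_X_smul_eq_zero [CommSemiring R] {M : Type*} [AddCommMonoid M]
    [Module (MvPolynomial σ R) M] {x : M} (hx : ∀ i, (X i : MvPolynomial σ R) • x = 0)
    {ℓ : MvPolynomial σ R} (hℓ : ℓ.IsHomogeneous 1) : ℓ • x = 0 := by
  rw [← mem_homogeneousSubmodule, homogeneousSubmodule_one_eq_span_X] at hℓ
  induction hℓ using Submodule.span_induction with
  | mem _ h => obtain ⟨i, rfl⟩ := h; exact hx i
  | zero => exact zero_smul _ x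
  | add p q _ _ hp hq => rw [add_smul, hp, hq, add_zero]
  | smul c p _ hp => rw [smul_eq_C_mul, mul_smul, hp, smul_zero]

/- A polynomial is a zero divisor on `M` iff it lies in one of the finitely many associated primes;
each of these cuts out a proper subspace of the space of linear forms, and finitely many proper
subspaces do not cover a vector space over an infinite field. -/
lemma exists_linearForm_isSMulRegular {K : Type*} [Field K] [Infinite K] [Finite σ]
    (M : Type*) [AddCommGroup M] [Module (MvPolynomial σ K) M] [Module.Finite (MvPolynomial σ K) M]
    (hM : ∀ x : M, (∀ i, (X i : MvPolynomial σ K) • x = 0) → x = 0) :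
    ∃ ℓ : MvPolynomial σ K, ℓ.IsHomogeneous 1 ∧ IsSMulRegular M ℓ := by
  classical
  have hfin := associatedPrimes.finite (MvPolynomial σ K) M
  have hproper : ⊤ ∉ hfin.toFinset.image (gradedPart · 1) := by
    simp only [Finset.mem_image, Set.Finite.mem_toFinset, not_exists, not_and]
    intro p hp htop
    obtain ⟨hprime, x, hx⟩ := isAssociatedPrime_iff.1 hp
    have hXp (i : σ) : (X i : MvPolynomial σ K) ∈ p := by
      have : (⟨X i, isHomogeneous_X K i⟩ : homogeneousSubmodule σ K 1) ∈ gradedPart p 1 :=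
        htop ▸ Submodule.mem_top
      exact this
    have hx0 : x = 0 := hM x fun i => by
      simpa only [hx, Submodule.mem_colon_singleton, Submodule.mem_bot] using hXp i
    refine hprime.ne_top ((Ideal.eq_top_iff_one p).2 ?_)
    rw [hx, hx0, Submodule.mem_colon_singleton, smul_zero]
    exact Submodule.zero_mem _
  obtain ⟨ℓ, hℓ⟩ := (Set.ne_univ_iff_exists_notMem _).1
    (Subspace.biUnion_ne_univ_of_top_notMem hproper)
  refine ⟨ℓ, ℓ.2, ?_⟩
  have hcompl : (ℓ : MvPolynomial σ K) ∉
      ⋃ p ∈ associatedPrimes (MvPolynomial σ K) M, (p : Set (MvPolynomial σ K)) := by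
    intro h
    obtain ⟨p, hp, hℓp⟩ := Set.mem_iUnion₂.1 h
    exact hℓ (Set.mem_iUnion₂.2
      ⟨gradedPart p 1, Finset.mem_image_of_mem _ (hfin.mem_toFinset.2 hp), hℓp⟩)
  rwa [biUnion_associatedPrimes_eq_compl_regular, Set.notMem_compl_iff] at hcompl

end LinearForms

variable {K : Type} [Field K] {m : ℕ}

section Ideals

variable {I J Q : Ideal (PR K m)}

lemma IsHomogI.sup (hI : IsHomogI I) (hJ : IsHomogI J) : IsHomogI (I ⊔ J) := by
  intro f hf n
  obtain ⟨a, ha, b, hb, rfl⟩ := Submodule.mem_sup.1 hf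
  rw [map_add]
  exact Submodule.add_mem_sup (hI a ha n) (hJ b hb n)

lemma IsSatI.eq_zero_of_forall_X_smul_eq_zero (hI : IsSatI I) {x : PR K m ⧸ I}
    (hx : ∀ i, (X i : PR K m) • x = 0) : x = 0 := by
  obtain ⟨f, rfl⟩ := Ideal.Quotient.mk_surjective x
  exact Ideal.Quotient.eq_zero_iff_mem.2 <| hI f fun i => Ideal.Quotient.eq_zero_iff_mem.1 (hx i)

lemma IsSatI.exists_linearForm_isSMulRegular_quotient [Infinite K] (hI : IsSatI I)
    (hJ : IsSatI J) :
    ∃ ℓ : PR K m, ℓ.IsHomogeneous 1 ∧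
      IsSMulRegular (PR K m ⧸ I) ℓ ∧ IsSMulRegular (PR K m ⧸ J) ℓ := by
  obtain ⟨ℓ, hℓ, hreg⟩ := exists_linearForm_isSMulRegular (σ := Fin (m + 1))
    (K := K) ((PR K m ⧸ I) × (PR K m ⧸ J)) fun x hx => Prod.ext
      (hI.eq_zero_of_forall_X_smul_eq_zero fun i => congrArg Prod.fst (hx i))
      (hJ.eq_zero_of_forall_X_smul_eq_zero fun i => congrArg Prod.snd (hx i))
  exact ⟨ℓ, hℓ, Prod.isSMulRegular_iff.1 hreg⟩

lemma le_satIdeal (Q : Ideal (PR K m)) : Q ≤ satIdeal Q := le_sInf fun _ h => h.1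

lemma isHomogI_satIdeal (Q : Ideal (PR K m)) : IsHomogI (satIdeal Q) := fun f hf n =>
  Submodule.mem_sInf.2 fun J hJ => hJ.2.1 f (Submodule.mem_sInf.1 hf J hJ) n

lemma isSatI_satIdeal (Q : Ideal (PR K m)) : IsSatI (satIdeal Q) := fun f hf =>
  Submodule.mem_sInf.2 fun J hJ => hJ.2.2 f fun i => Submodule.mem_sInf.1 (hf i) J hJ

/-- The scheme-theoretic intersection of two closed subschemes of `ℙ^m`. -/
def PSub.inter (A B : PSub K m) : PSub K m where
  I := satIdeal (A.I ⊔ B.I)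
  homog := isHomogI_satIdeal _
  sat := isSatI_satIdeal _

lemma isHomogI_awayIdeal (hQ : IsHomogI Q) {ℓ : PR K m} {j : ℕ} (hℓ : ℓ.IsHomogeneous j) :
    IsHomogI (awayIdeal Q ℓ) := by
  intro f hf n
  obtain ⟨k, hk⟩ := mem_awayIdeal.1 hf
  exact mem_awayIdeal.2 ⟨k, homogeneousComponent_add_mul (hℓ.pow k) f n ▸ hQ _ hk _⟩

lemma isSatI_awayIdeal {ℓ : PR K m} (hℓ : ℓ.IsHomogeneous 1) : IsSatI (awayIdeal Q ℓ) := by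
  intro f hf
  have hℓf : ℓ * f ∈ awayIdeal Q ℓ := Ideal.Quotient.eq_zero_iff_mem.1 <|
    smul_eq_zero_of_forall_X_smul_eq_zero (x := Ideal.Quotient.mk (awayIdeal Q ℓ) f)
      (fun i => Ideal.Quotient.eq_zero_iff_mem.2 (hf i)) hℓ
  obtain ⟨k, hk⟩ := mem_awayIdeal.1 hℓf
  exact mem_awayIdeal.2 ⟨k + 1, by rwa [pow_succ, mul_assoc]⟩

lemma IsHomogI.exists_pow_mul_mem_of_mem_satIdeal (hQ : IsHomogI Q) {ℓ f : PR K m}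
    (hℓ : ℓ.IsHomogeneous 1) (hf : f ∈ satIdeal Q) : ∃ k, ℓ ^ k * f ∈ Q :=
  mem_awayIdeal.1 <| Submodule.mem_sInf.1 hf _
    ⟨fun _ hg => mem_awayIdeal.2 ⟨0, by rwa [pow_zero, one_mul]⟩, isHomogI_awayIdeal hQ hℓ,
      isSatI_awayIdeal hℓ⟩

end Ideals

section GradedPart

variable {I J : Ideal (PR K m)}

lemma gradedPart_sup (hI : IsHomogI I) (hJ : IsHomogI J) (t : ℕ) :
    gradedPart (I ⊔ J) t = gradedPart I t ⊔ gradedPart J t := by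
  refine le_antisymm (fun f hf => ?_)
    (sup_le (gradedPart_mono le_sup_left t) (gradedPart_mono le_sup_right t))
  obtain ⟨a, ha, b, hb, hab⟩ := Submodule.mem_sup.1 hf
  refine Submodule.mem_sup.2
    ⟨⟨homogeneousComponent t a, homogeneousComponent_mem t a⟩, hI a ha t,
      ⟨homogeneousComponent t b, homogeneousComponent_mem t b⟩, hJ b hb t, Subtype.ext ?_⟩
  calc homogeneousComponent t a + homogeneousComponent t b
      = homogeneousComponent t (f : PR K m) := by rw [← map_add, hab]; rfl
    _ = f := homogeneousComponent_eq_self f.2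

lemma schemeSpanSub_eq_dualAnnihilator (I : Ideal (PR K m)) (d : ℕ) :
    schemeSpanSub I d = (gradedPart I d).dualAnnihilator := by
  ext φ
  rw [Submodule.mem_dualAnnihilator]
  rfl

end GradedPart

section HilbertFunction

variable {I J : Ideal (PR K m)}

/-- The degree-`t` part `(R/I)_t` of the quotient ring, whose dimension is `hilbQ I t`. -/
abbrev quotientPart (I : Ideal (PR K m)) (t : ℕ) : Submodule K (PR K m ⧸ I) :=
  (Hd K m t).map (Ideal.Quotient.mkₐ K I).toLinearMap

lemma hilbQ_add_finrank_gradedPart (I : Ideal (PR K m)) (t : ℕ) :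
    hilbQ I t + Module.finrank K (gradedPart I t) = Module.finrank K (Hd K m t) := by
  let q := (Ideal.Quotient.mkₐ K I).toLinearMap.domRestrict (Hd K m t)
  have hrange : LinearMap.range q = quotientPart I t :=
    LinearMap.range_domRestrict _ _
  have hker : LinearMap.ker q = gradedPart I t := by
    ext f
    exact Ideal.Quotient.eq_zero_iff_mem
  calc hilbQ I t + Module.finrank K (gradedPart I t)
      = Module.finrank K (LinearMap.range q) + Module.finrank K (LinearMap.ker q) := by
        rw [hrange, hker, hilbQ]
    _ = Module.finrank K (Hd K m t) := q.finrank_range_add_finrank_ker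

lemma hilbQ_inf_le_add (I J : Ideal (PR K m)) (t : ℕ) :
    hilbQ (I ⊓ J) t ≤ hilbQ I t + hilbQ J t := by
  have hinf : gradedPart (I ⊓ J) t = gradedPart I t ⊓ gradedPart J t := rfl
  have hsup : Module.finrank K ↥(gradedPart I t ⊔ gradedPart J t) ≤ Module.finrank K (Hd K m t) :=
    Submodule.finrank_le _
  have hdim := Submodule.finrank_sup_add_finrank_inf_eq (gradedPart I t) (gradedPart J t)
  have hI := hilbQ_add_finrank_gradedPart I t
  have hJ := hilbQ_add_finrank_gradedPart J t
  have hIJ := hilbQ_add_finrank_gradedPart (I ⊓ J) t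
  rw [hinf] at hIJ
  omega

lemma IsZeroDimI.inf (hI : IsZeroDimI I) (hJ : IsZeroDimI J) : IsZeroDimI (I ⊓ J) := by
  obtain ⟨C, hC⟩ := hI
  obtain ⟨D, hD⟩ := hJ
  exact ⟨C + D, fun t => (hilbQ_inf_le_add I J t).trans (add_le_add (hC t) (hD t))⟩

lemma map_lsmul_quotientPart_le (I : Ideal (PR K m)) {f : PR K m} {k : ℕ}
    (hf : f.IsHomogeneous k) (t : ℕ) :
    (quotientPart I t).map (Algebra.lsmul K K (PR K m ⧸ I) f) ≤ quotientPart I (k + t) := by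
  rintro _ ⟨_, ⟨g, hg, rfl⟩, rfl⟩
  exact ⟨f * g, hf.mul hg, rfl⟩

lemma finrank_map_lsmul_quotientPart {f : PR K m} (hreg : IsSMulRegular (PR K m ⧸ I) f) (t : ℕ) :
    Module.finrank K ((quotientPart I t).map (Algebra.lsmul K K (PR K m ⧸ I) f)) = hilbQ I t :=
  (Submodule.equivMapOfInjective (Algebra.lsmul K K (PR K m ⧸ I) f) hreg
    (quotientPart I t)).finrank_eq.symm

lemma monotone_hilbQ {ℓ : PR K m} (hℓ : ℓ.IsHomogeneous 1)
    (hreg : IsSMulRegular (PR K m ⧸ I) ℓ) : Monotone (hilbQ I) :=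
  monotone_nat_of_le_succ fun t => calc
    hilbQ I t = Module.finrank K ((quotientPart I t).map (Algebra.lsmul K K _ ℓ)) :=
      (finrank_map_lsmul_quotientPart hreg t).symm
    _ ≤ hilbQ I (1 + t) := Submodule.finrank_mono (map_lsmul_quotientPart_le I hℓ t)
    _ = hilbQ I (t + 1) := by rw [add_comm]

lemma exists_mul_sub_mem_of_hilbQ_le {f : PR K m} {k t : ℕ} (hf : f.IsHomogeneous k)
    (hreg : IsSMulRegular (PR K m ⧸ I) f) (hle : hilbQ I (k + t) ≤ hilbQ I t) {a : PR K m}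
    (ha : a.IsHomogeneous (k + t)) : ∃ b : PR K m, b.IsHomogeneous t ∧ f * b - a ∈ I := by
  have hsurj : (quotientPart I t).map (Algebra.lsmul K K (PR K m ⧸ I) f) = quotientPart I (k + t) :=
    Submodule.eq_of_le_of_finrank_le (map_lsmul_quotientPart_le I hf t)
      (hle.trans_eq (finrank_map_lsmul_quotientPart hreg t).symm)
  have ha' : Ideal.Quotient.mk I a ∈ quotientPart I (k + t) := ⟨a, ha, rfl⟩
  rw [← hsurj] at ha'
  obtain ⟨_, ⟨b, hb, rfl⟩, hba⟩ := ha'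
  exact ⟨b, hb, (Ideal.Quotient.mk_eq_mk_iff_sub_mem (f * b) a).1 hba⟩

lemma IsZeroDimI.hilbQ_le_idealDeg (hI : IsZeroDimI I) (hmono : Monotone (hilbQ I)) (t : ℕ) :
    hilbQ I t ≤ idealDeg I :=
  Filter.le_limsup_of_frequently_le
    ((Filter.eventually_ge_atTop t).mono fun _ h => hmono h).frequently
    (Filter.isBoundedUnder_of hI)

lemma IsZeroDimI.hilbQ_le_of_h1I_eq_zero (hI : IsZeroDimI I) (hmono : Monotone (hilbQ I)) {d : ℕ}
    (h1 : h1I I d = 0) (t : ℕ) : hilbQ I t ≤ hilbQ I d :=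
  (hI.hilbQ_le_idealDeg hmono t).trans (Nat.sub_eq_zero_iff_le.1 h1)

end HilbertFunction

section Intersection

variable {I J : Ideal (PR K m)}

lemma mem_sup_of_mul_mem_sup (hI : IsHomogI I) (hJ : IsHomogI J) {g f : PR K m} {k d : ℕ}
    (hg : g.IsHomogeneous k) (hgI : IsSMulRegular (PR K m ⧸ I) g)
    (hgJ : IsSMulRegular (PR K m ⧸ J) g) (hle : hilbQ (I ⊓ J) (k + d) ≤ hilbQ (I ⊓ J) d)
    (hf : f.IsHomogeneous d) (hgf : g * f ∈ I ⊔ J) : f ∈ I ⊔ J := by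
  obtain ⟨a, ha, b, hb, hab⟩ : ∃ a ∈ gradedPart I (k + d), ∃ b ∈ gradedPart J (k + d),
      a + b = ⟨g * f, hg.mul hf⟩ := by
    rw [← Submodule.mem_sup, ← gradedPart_sup hI hJ]
    exact hgf
  have hab : (a + b : PR K m) = g * f := congrArg Subtype.val hab
  obtain ⟨a', -, ha'⟩ :=
    exists_mul_sub_mem_of_hilbQ_le hg (isSMulRegular_quotient_inf hgI hgJ) hle a.2
  have ha'I : a' ∈ I := mem_of_isSMulRegular_quotient_of_smul_mem hgI <|
    (Submodule.sub_mem_iff_left I ha).1 ha'.1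
  have hb'J : f - a' ∈ J := mem_of_isSMulRegular_quotient_of_smul_mem hgJ <| by
    have : g * (f - a') = b - (g * a' - a) := by rw [mul_sub, ← hab]; ring
    rw [smul_eq_mul, this]
    exact J.sub_mem hb ha'.2
  exact add_sub_cancel a' f ▸ Submodule.add_mem_sup ha'I hb'J

variable [Infinite K] {A B : PSub K m} {d : ℕ}

lemma gradedPart_inter_of_h1I_eq_zero (hA : IsZeroDimI A.I) (hB : IsZeroDimI B.I)
    (h1 : h1I (A.I ⊓ B.I) d = 0) :
    gradedPart (A.inter B).I d = gradedPart A.I d ⊔ gradedPart B.I d := by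
  rw [← gradedPart_sup A.homog B.homog]
  refine le_antisymm (fun f hf => ?_) (gradedPart_mono (le_satIdeal _) d)
  obtain ⟨ℓ, hℓ, hregA, hregB⟩ := A.sat.exists_linearForm_isSMulRegular_quotient B.sat
  obtain ⟨k, hk⟩ := (A.homog.sup B.homog).exists_pow_mul_mem_of_mem_satIdeal hℓ hf
  have hmono := monotone_hilbQ hℓ (isSMulRegular_quotient_inf hregA hregB)
  exact mem_sup_of_mul_mem_sup A.homog B.homog (by simpa only [one_mul] using hℓ.pow k)
    (hregA.pow k) (hregB.pow k) ((hA.inf hB).hilbQ_le_of_h1I_eq_zero hmono h1 _) f.2 hk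

theorem schemeSpanSub_inter_of_h1I_eq_zero (hA : IsZeroDimI A.I) (hB : IsZeroDimI B.I)
    (h1 : h1I (A.I ⊓ B.I) d = 0) :
    schemeSpanSub (A.inter B).I d = schemeSpanSub A.I d ⊓ schemeSpanSub B.I d := by
  simp only [schemeSpanSub_eq_dualAnnihilator, gradedPart_inter_of_h1I_eq_zero hA hB h1,
    Submodule.dualAnnihilator_sup_eq]

end Intersection

end

theorem stmt2_general (K : Type) [Field K] [Infinite K]
    (m d : ℕ) (P : PN K m d)
    (A B : PSub K m) (hA0 : IsZeroDimI A.I) (hB0 : IsZeroDimI B.I) (hBA : ¬ B.I ≤ A.I)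
    (hPA : inSpanI A.I d P) (hPB : inSpanI B.I d P)
    (hA : ∀ A' : PSub K m, A.I < A'.I → ¬ inSpanI A'.I d P) :
    0 < h1I (A.I ⊓ B.I) d := by
  refine Nat.pos_of_ne_zero fun h1 => hA (A.inter B) ?_ ?_
  · exact (left_lt_sup.2 hBA).trans_le (le_satIdeal _)
  · rw [inSpanI, schemeSpanSub_inter_of_h1I_eq_zero hA0 hB0 h1]
    exact ⟨hPA, hPB⟩

/-- Lemma 2 (`v1`): if `A ≠ B` are zero-dimensional subschemes of `ℙ^m`, with
`P ∈ ⟨ν_d(A)⟩ ∩ ⟨ν_d(B)⟩` and `P` in the span of no Veronese image of a proper subscheme of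
`A` or of `B`, then `h^1(𝓘_{A∪B}(d)) > 0`. -/
theorem stmt2 (K : Type) [Field K] [IsAlgClosed K] [CharZero K]
    (m d : ℕ) (P : PN K m d)
    (A B : PSub K m) (hA0 : IsZeroDimI A.I) (hB0 : IsZeroDimI B.I) (hAB : A.I ≠ B.I)
    (hPA : inSpanI A.I d P) (hPB : inSpanI B.I d P)
    (hA : ∀ A' : PSub K m, A.I < A'.I → ¬ inSpanI A'.I d P)
    (hB : ∀ B' : PSub K m, B.I < B'.I → ¬ inSpanI B'.I d P) :
    0 < h1I (A.I ⊓ B.I) d :=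
  stmt2_general K m d P A B hA0 hB0
    (fun hBA => hB A (lt_of_le_of_ne hBA hAB.symm) hPA) hPA hPB hA
end
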